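/- arXiv:1104.5185 — 2 statements merged into one kernel-verified Lean document; each statement's English description precedes it below -/
import Mathlib

section
/- Let H₁, H₂, …, H_p be pairwise commuting essential homeomorphisms of ℝ² and let (q_i)_{1≤i≤p} be a family of positive integers. If there is an essential line Γ in ℝ² such that Γ < H_i^{q_i}(Γ) for every i ∈ {1, …, p}, then there is an essential line Γ' in ℝ² such that Γ' < H_i(Γ') for every i ∈ {1, …, p}. -/
open Filter Topology Set

noncomputable section

/-- The plane ℝ². -/
abbrev Plane := ℝ × ℝ

/-- The open annulus 𝔸 = ℝ/ℤ × ℝ. -/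
abbrev Ann := AddCircle (1 : ℝ) × ℝ

/-- The covering map π : ℝ² → 𝔸, (x,y) ↦ (x + ℤ, y). -/
def prj : Plane → Ann := fun p => ((p.1 : AddCircle (1 : ℝ)), p.2)

/-- The deck transformation T^k : ℝ² → ℝ², (x,y) ↦ (x + k, y). -/
def Tr (k : ℤ) : Plane → Plane := fun p => (p.1 + (k : ℝ), p.2)

/-- `F` is a lift of `f` to the universal cover ℝ² of the annulus. -/
def IsLift (f : Ann ≃ₜ Ann) (F : Plane ≃ₜ Plane) : Prop :=
  ∀ p : Plane, prj (F p) = f (prj p)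

/-- `f` is isotopic to the identity: there is a continuous family of homeomorphisms
joining the identity to `f`. -/
def IsotopicToId (f : Ann ≃ₜ Ann) : Prop :=
  ∃ H : ℝ → Ann → Ann,
    Continuous (fun q : ℝ × Ann => H q.1 q.2) ∧
    (∀ t : ℝ, ∃ h : Ann ≃ₜ Ann, ∀ z, H t z = h z) ∧
    (∀ z, H 0 z = z) ∧ (∀ z, H 1 z = f z)

/-- An essential circle in 𝔸: a simple closed curve which is not null-homotopic. -/
def IsEssentialCircle (c : Set Ann) : Prop :=
  ∃ φ : C(AddCircle (1 : ℝ), Ann), Function.Injective φ ∧ Set.range φ = c ∧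
    ¬ ∃ pt : Ann, φ.Homotopic (ContinuousMap.const _ pt)

/-- `f` has the intersection property: every essential circle meets its image. -/
def IntersectionProperty (f : Ann → Ann) : Prop :=
  ∀ c : Set Ann, IsEssentialCircle c → (c ∩ f '' c).Nonempty

/-- `z` is a positively recurrent point of `g`: some subsequence of the forward orbit
of `z` converges to `z`. -/
def PosRec {X : Type*} [TopologicalSpace X] (g : X → X) (z : X) : Prop :=
  ∃ φ : ℕ → ℕ, StrictMono φ ∧ Tendsto (fun k => g^[φ k] z) atTop (𝓝 z)

/-- The positively recurrent point `z` has rotation number `ρ` for the lift `F` of `f`. -/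
def HasRotNum (f : Ann → Ann) (F : Plane → Plane) (z : Ann) (ρ : ℝ) : Prop :=
  PosRec f z ∧
    ∀ zt : Plane, prj zt = z →
      ∀ φ : ℕ → ℕ, StrictMono φ →
        Tendsto (fun k => f^[φ k] z) atTop (𝓝 z) →
        Tendsto (fun k => ((F^[φ k] zt).1 - zt.1) / (φ k : ℝ)) atTop (𝓝 ρ)

/-- The rotation set Rot(F): the set of rotation numbers of positively recurrent
points of `f`. -/
def Rot (f : Ann → Ann) (F : Plane → Plane) : Set ℝ := {ρ | ∃ z, HasRotNum f F z ρ}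

/-- The region `L(Γ)` of the plane on the left (west) of a line `Γ` (as a subset of ℝ²):
points lying in the connected component of the complement of `Γ` containing all far-west
points of the horizontal axis. -/
def Lset (Γ : Set Plane) : Set Plane :=
  {p | ∃ s : ℝ, ∀ x ≤ s, p ∈ connectedComponentIn Γᶜ ((x, 0) : Plane)}

/-- The region `R(Γ)` of the plane on the right (east) of a line `Γ`. -/
def Rset (Γ : Set Plane) : Set Plane :=
  {p | ∃ s : ℝ, ∀ x ≥ s, p ∈ connectedComponentIn Γᶜ ((x, 0) : Plane)}

/-- The relation `Γ₁ < Γ₂` on (essential, oriented from south to north) lines: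
`Cl(L(Γ₁)) ⊆ L(Γ₂)`. -/
def lineLT (Γ₁ Γ₂ : Set Plane) : Prop := closure (Lset Γ₁) ⊆ Lset Γ₂

/-- An essential line in ℝ², oriented from south to north: a properly embedded copy of ℝ
whose second coordinate tends to ±∞ at ±∞. -/
def IsEssLinePlane (Γ : ℝ → Plane) : Prop :=
  Continuous Γ ∧ Function.Injective Γ ∧ IsProperMap Γ ∧
    Tendsto (fun t => (Γ t).2) atTop atTop ∧ Tendsto (fun t => (Γ t).2) atBot atBot

/-- An essential line in the annulus 𝔸: a properly embedded simple path joining one end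
to the other. -/
def IsEssLineAnn (γ : ℝ → Ann) : Prop :=
  Continuous γ ∧ Function.Injective γ ∧ IsProperMap γ ∧
    ((Tendsto (fun t => (γ t).2) atTop atTop ∧ Tendsto (fun t => (γ t).2) atBot atBot) ∨
     (Tendsto (fun t => (γ t).2) atTop atBot ∧ Tendsto (fun t => (γ t).2) atBot atTop))

/-- An oriented essential line in 𝔸 joining the lower end S to the upper end N. -/
def IsEssLineAnnSN (γ : ℝ → Ann) : Prop :=
  Continuous γ ∧ Function.Injective γ ∧ IsProperMap γ ∧
    Tendsto (fun t => (γ t).2) atTop atTop ∧ Tendsto (fun t => (γ t).2) atBot atBot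

/-- An essential homeomorphism of the plane, orientation preserving: it maps every
(south-to-north oriented) essential line to an essential line and preserves the left
regions of essential lines. -/
def EssentialHomeo (H : Plane ≃ₜ Plane) : Prop :=
  (∀ Γ : ℝ → Plane, IsEssLinePlane Γ → IsEssLinePlane (⇑H ∘ Γ)) ∧
  (∀ Γ : ℝ → Plane, IsEssLinePlane Γ →
    ⇑H '' Lset (Set.range Γ) = Lset (Set.range (⇑H ∘ Γ)))

/-- Along a path in the slit plane, a continuous logarithm differs from the principal one by a
constant. -/
lemma log_track (g ℓ : ℝ → ℂ) (hg : Continuous g) (hℓ : Continuous ℓ)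
    (hexp : ∀ s, Complex.exp (ℓ s) = g s) (a b : ℝ) (hab : a ≤ b)
    (hs : ∀ s ∈ Icc a b, g s ∈ Complex.slitPlane) :
    (ℓ a).im - (g a).arg = (ℓ b).im - (g b).arg := by
  have hcont : ContinuousOn (fun s => ((ℓ s).im - (g s).arg) / (2 * Real.pi)) (Icc a b) := by
    apply ContinuousOn.div_const
    apply ContinuousOn.sub
    · exact (Complex.continuous_im.comp hℓ).continuousOn
    · intro s hs'
      exact ((Complex.continuousAt_arg (hs s hs')).comp hg.continuousAt).continuousWithinAt
  have hIntg : ∀ s ∈ Icc a b, ∃ n : ℤ, ((ℓ s).im - (g s).arg) / (2 * Real.pi) = n := by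
    intro s hs'
    have hne : g s ≠ 0 := Complex.slitPlane_ne_zero (hs s hs')
    have h1 : Complex.exp (ℓ s) = Complex.exp (Complex.log (g s)) := by
      rw [hexp, Complex.exp_log hne]
    obtain ⟨n, hn⟩ := Complex.exp_eq_exp_iff_exists_int.1 h1
    refine ⟨n, ?_⟩
    have h2 := congrArg Complex.im hn
    simp [Complex.log_im] at h2
    rw [h2]
    field_simp
    ring
  have key : ((ℓ a).im - (g a).arg) / (2 * Real.pi) = ((ℓ b).im - (g b).arg) / (2 * Real.pi) := by
    have hpre : IsPreconnected ((fun s => ((ℓ s).im - (g s).arg) / (2 * Real.pi)) '' Icc a b) :=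
      isPreconnected_Icc.image _ hcont
    obtain ⟨n, hn⟩ := hIntg a (left_mem_Icc.2 hab)
    obtain ⟨m, hm⟩ := hIntg b (right_mem_Icc.2 hab)
    by_contra hne
    rw [hn, hm] at hne
    have hnm : n ≠ m := by rintro rfl; exact hne rfl
    have hord := hpre.ordConnected
    have ha : (n : ℝ) ∈ ((fun s => ((ℓ s).im - (g s).arg) / (2 * Real.pi)) '' Icc a b) :=
      ⟨a, left_mem_Icc.2 hab, hn⟩
    have hb : (m : ℝ) ∈ ((fun s => ((ℓ s).im - (g s).arg) / (2 * Real.pi)) '' Icc a b) :=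
      ⟨b, right_mem_Icc.2 hab, hm⟩
    have hhalf : ∀ k : ℤ, ((k : ℝ) + 1 / 2) ∉
        ((fun s => ((ℓ s).im - (g s).arg) / (2 * Real.pi)) '' Icc a b) := by
      rintro k ⟨s, hs1, hs2⟩
      obtain ⟨j, hj⟩ := hIntg s hs1
      simp only at hs2
      rw [hj] at hs2
      have : (2 * j : ℝ) = 2 * k + 1 := by linarith
      have h3 : (2 * j : ℤ) = 2 * k + 1 := by exact_mod_cast this
      omega
    rcases lt_or_gt_of_ne hnm with h | h
    · apply hhalf n
      apply hord.out ha hb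
      have : (n : ℝ) + 1 ≤ m := by exact_mod_cast h
      constructor <;> linarith
    · apply hhalf m
      apply hord.out hb ha
      have : (m : ℝ) + 1 ≤ n := by exact_mod_cast h
      constructor <;> linarith
  have hpi := Real.pi_pos
  field_simp at key
  linarith

/-- Topological crossing lemma. -/
lemma crossing (F : ℝ × ℝ → ℂ) (hF : Continuous F) (hne : ∀ z, F z ≠ 0) (T : ℝ) (hT : 0 ≤ T)
    (hleft : ∀ t, - F (0, t) ∈ Complex.slitPlane)
    (hright : ∀ t, F (1, t) ∈ Complex.slitPlane)
    (htop : ∀ s, (F (s, T)).im < 0) (hbot : ∀ s, 0 < (F (s, -T)).im) : False := by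
  have hcov := Complex.isCoveringMapOn_exp
  obtain ⟨ℓ, ⟨-, hℓ⟩, -⟩ := hcov.existsUnique_continuousMap_lifts (A := ℝ × ℝ)
    ⟨F, hF⟩ (a₀ := (0, 0)) (e₀ := Complex.log (F (0, 0)))
    (by simp [Complex.exp_log (hne (0, 0))]) (by intro a; simpa using hne a)
  have hexp : ∀ z, Complex.exp (ℓ z) = F z := fun z => congrFun hℓ z
  have hc : Continuous ℓ := ℓ.continuous
  have e1 := log_track (fun t => F (1, t)) (fun t => ℓ (1, t)) (by fun_prop) (by fun_prop)
    (fun t => hexp _) (-T) T (by linarith) (fun t _ => hright t)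
  have e2 := log_track (fun t => - F (0, t)) (fun t => ℓ (0, t) + Real.pi * Complex.I)
    (by fun_prop) (by fun_prop)
    (fun t => by rw [Complex.exp_add, hexp, Complex.exp_pi_mul_I]; ring) (-T) T (by linarith)
    (fun t _ => hleft t)
  have e3 := log_track (fun s => F (s, T)) (fun s => ℓ (s, T)) (by fun_prop) (by fun_prop)
    (fun t => hexp _) 0 1 (by linarith) (fun t _ => Or.inr (htop t).ne)
  have e4 := log_track (fun s => F (s, -T)) (fun s => ℓ (s, -T)) (by fun_prop) (by fun_prop)
    (fun t => hexp _) 0 1 (by linarith) (fun t _ => Or.inr (hbot t).ne')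
  simp only [Complex.add_im, Complex.mul_im, Complex.ofReal_re, Complex.I_im, Complex.ofReal_im,
    Complex.I_re] at e2
  rw [Complex.arg_neg_eq_arg_add_pi_of_im_neg (htop 0),
    Complex.arg_neg_eq_arg_sub_pi_of_im_pos (hbot 0)] at e2
  have := Real.pi_pos
  linarith

/-- The intersection of an essential line with a horizontal band is bounded. -/
lemma ess_bdd {Γ : ℝ → Plane} (h : IsEssLinePlane Γ) (M : ℝ) :
    ∃ m : ℝ, 0 ≤ m ∧ ∀ t, |(Γ t).2| ≤ M → |(Γ t).1| < m := by
  obtain ⟨hc, -, -, ht, hb⟩ := h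
  obtain ⟨T1, hT1⟩ := (ht.eventually (eventually_gt_atTop M)).exists_forall_of_atTop
  obtain ⟨T2, hT2⟩ := (hb.eventually (eventually_lt_atBot (-M))).exists_forall_of_atBot
  obtain ⟨C, hC⟩ := (isCompact_Icc (a := T2) (b := T1)).exists_bound_of_continuousOn
    (f := fun t => (Γ t).1) (by fun_prop)
  refine ⟨|C| + 1, by positivity, fun t htM => ?_⟩
  have h1 : t ∈ Icc T2 T1 := by
    constructor
    · by_contra hlt
      push Not at hlt
      have := hT2 t hlt.le
      have := (abs_le.1 htM).1
      linarith
    · by_contra hlt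
      push Not at hlt
      have := hT1 t hlt.le
      have := (abs_le.1 htM).2
      linarith
  have := hC t h1
  rw [Real.norm_eq_abs] at this
  have := le_abs_self C
  linarith

lemma ess_closed {Γ : ℝ → Plane} (h : IsEssLinePlane Γ) : IsClosed (range Γ) :=
  h.2.2.1.isClosedMap.isClosed_range

/-- far left points of a band are in `Lset`. -/
lemma mem_Lset_left {Γ : ℝ → Plane} (h : IsEssLinePlane Γ) (M : ℝ) :
    ∃ m : ℝ, 0 ≤ m ∧ ∀ x y, |y| ≤ M → x ≤ -m → ((x, y) : Plane) ∈ Lset (range Γ) := by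
  obtain ⟨m, hm, hb⟩ := ess_bdd h |M|
  refine ⟨m, hm, fun x y hy hx => ⟨-m, fun x' hx' => ?_⟩⟩
  have hconv : Convex ℝ (Iic (-m) ×ˢ Icc (-|M|) |M|) := (convex_Iic _).prod (convex_Icc _ _)
  have hM := le_abs_self M
  have hM' := abs_nonneg M
  have hyy := abs_le.1 hy
  apply hconv.isPreconnected.subset_connectedComponentIn (x := (x', 0))
  · exact ⟨hx', by simp⟩
  · rintro ⟨u, v⟩ ⟨hu, hv⟩ ⟨t, ht⟩
    have := hb t (by rw [ht]; exact abs_le.2 hv)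
    rw [ht] at this
    have := (abs_lt.1 this).1
    simp only [mem_Iic] at hu
    simp only at this
    linarith
  · exact ⟨hx, by constructor <;> simp <;> linarith⟩

lemma Lset_eq {Γ : ℝ → Plane} (h : IsEssLinePlane Γ) : ∃ m : ℝ, 0 ≤ m ∧ ∀ x ≤ -m,
    Lset (range Γ) = connectedComponentIn (range Γ)ᶜ ((x, 0) : Plane) := by
  obtain ⟨m, hm, hL⟩ := mem_Lset_left h 0
  refine ⟨m, hm, fun x hx => ?_⟩
  obtain ⟨s, hs⟩ := hL x 0 (by simp) hx
  have h1 := hs (min s x) (min_le_left _ _)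
  ext p
  constructor
  · rintro ⟨s', hs'⟩
    have h2 := hs' (min s (min s' x)) (by simp)
    have h3 := hs (min s (min s' x)) (by simp)
    rw [connectedComponentIn_eq h3] at h2
    exact h2
  · intro hp
    refine ⟨s, fun x' hx' => ?_⟩
    rw [connectedComponentIn_eq (hs x' hx')]
    exact hp

lemma Lset_open {Γ : ℝ → Plane} (h : IsEssLinePlane Γ) : IsOpen (Lset (range Γ)) := by
  obtain ⟨m, hm, hL⟩ := Lset_eq h
  rw [hL (-m) le_rfl]
  exact (ess_closed h).isOpen_compl.connectedComponentIn

lemma Lset_preconn {Γ : ℝ → Plane} (h : IsEssLinePlane Γ) : IsPreconnected (Lset (range Γ)) := by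
  obtain ⟨m, hm, hL⟩ := Lset_eq h
  rw [hL (-m) le_rfl]
  exact isPreconnected_connectedComponentIn

lemma Lset_disj {Γ : ℝ → Plane} (h : IsEssLinePlane Γ) : Lset (range Γ) ⊆ (range Γ)ᶜ := by
  obtain ⟨m, hm, hL⟩ := Lset_eq h
  rw [hL (-m) le_rfl]
  exact connectedComponentIn_subset _ _

/-- A preconnected set off the line meeting `Lset` lies in `Lset`. -/
lemma subset_Lset {Γ : ℝ → Plane} (h : IsEssLinePlane Γ) {S : Set Plane} (hS : IsPreconnected S)
    (hd : S ⊆ (range Γ)ᶜ) {z : Plane} (hz : z ∈ S) (hzL : z ∈ Lset (range Γ)) :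
    S ⊆ Lset (range Γ) := by
  obtain ⟨m, hm, hL⟩ := Lset_eq h
  rw [hL (-m) le_rfl] at hzL ⊢
  rw [connectedComponentIn_eq hzL]
  exact hS.subset_connectedComponentIn hz hd

/-- far right points are not in `Lset`. -/
lemma not_mem_Lset_zero {Γ : ℝ → Plane} (h : IsEssLinePlane Γ) :
    ∃ m : ℝ, 0 ≤ m ∧ ∀ x, m ≤ x → ((x, 0) : Plane) ∉ Lset (range Γ) := by
  obtain ⟨m, hm, hb⟩ := ess_bdd h 0
  obtain ⟨m', hm', hL⟩ := Lset_eq h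
  refine ⟨m, hm, fun x hx hmem => ?_⟩
  set x₀ := -(max m m') with hx₀
  rw [hL x₀ (by simp [x₀])] at hmem
  have hx₀m : x₀ ≤ -m := by simp [x₀]
  have hopen : IsOpen (connectedComponentIn (range Γ)ᶜ ((x₀, 0) : Plane)) :=
    (ess_closed h).isOpen_compl.connectedComponentIn
  have hx₀mem : ((x₀, 0) : Plane) ∈ (range Γ)ᶜ := by
    rintro ⟨t, ht⟩
    have := hb t (by rw [ht]; simp)
    rw [ht] at this
    have := (abs_lt.1 this).1
    simp only at this
    linarith
  have hconn : IsConnected (connectedComponentIn (range Γ)ᶜ ((x₀, 0) : Plane)) :=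
    isConnected_connectedComponentIn_iff.2 hx₀mem
  have hpc := hopen.isConnected_iff_isPathConnected.1 hconn
  obtain ⟨α, hα⟩ := hpc.joinedIn _ (mem_connectedComponentIn hx₀mem) _ hmem
  have hα' : ∀ s, α s ∉ range Γ := fun s => connectedComponentIn_subset _ _ (hα s)
  obtain ⟨B, hB⟩ := (isCompact_univ (X := unitInterval)).exists_bound_of_continuousOn
    (f := fun s => (α s).2) (by fun_prop)
  obtain ⟨hc, -, -, ht, hbt⟩ := h
  obtain ⟨T1, hT1⟩ := (ht.eventually (eventually_gt_atTop B)).exists_forall_of_atTop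
  obtain ⟨T2, hT2⟩ := (hbt.eventually (eventually_lt_atBot (-B))).exists_forall_of_atBot
  set T := |T1| + |T2|
  have hTT1 : T1 ≤ T := by have := le_abs_self T1; have := abs_nonneg T2; simp only [T]; linarith
  have hTT2 : -T ≤ T2 := by
    have := neg_abs_le T2; have := abs_nonneg T1; simp only [T]; linarith
  have hext : ∀ s : ℝ, ∃ s' : unitInterval, α.extend s = α s' := fun s => by
    have : α.extend s ∈ range α := by rw [← α.extend_range]; exact ⟨s, rfl⟩
    obtain ⟨s', h⟩ := this
    exact ⟨s', h.symm⟩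
  have hαc : Continuous α.extend := α.continuous_extend
  let E : Plane → ℂ := fun p => ⟨p.1, p.2⟩
  have hE : Continuous E := by
    have : E = fun p => Complex.equivRealProdCLM.symm p := rfl
    rw [this]; fun_prop
  refine crossing (fun z => E (α.extend z.1 - Γ z.2)) (by fun_prop) ?_ T (by positivity) ?_ ?_ ?_ ?_
  · rintro ⟨s, t⟩ h0
    obtain ⟨s', hs'⟩ := hext s
    apply hα' s'
    refine ⟨t, ?_⟩
    have h1 := congrArg Complex.re h0
    have h2 := congrArg Complex.im h0
    simp only [E, Complex.zero_re, Complex.zero_im, hs', Prod.fst_sub, Prod.snd_sub] at h1 h2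
    ext <;> linarith
  · intro t
    simp only [Path.extend_zero]
    by_cases him : (Γ t).2 = 0
    · left
      have := hb t (by rw [him]; simp)
      have := (abs_lt.1 this).1
      simp [E]
      linarith
    · right
      simp [E, him]
  · intro t
    simp only [Path.extend_one]
    by_cases him : (Γ t).2 = 0
    · left
      have := hb t (by rw [him]; simp)
      have := (abs_lt.1 this).2
      simp [E]
      linarith
    · right
      simp [E, him]
  · intro s
    obtain ⟨s', hs'⟩ := hext s
    have h1 := hB s' (mem_univ _)
    rw [Real.norm_eq_abs] at h1
    have h2 := hT1 T hTT1
    have := (abs_le.1 h1).2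
    simp [E, hs']
    linarith
  · intro s
    obtain ⟨s', hs'⟩ := hext s
    have h1 := hB s' (mem_univ _)
    rw [Real.norm_eq_abs] at h1
    have h2 := hT2 (-T) hTT2
    have := (abs_le.1 h1).1
    simp [E, hs']
    linarith

lemma not_mem_Lset_right {Γ : ℝ → Plane} (h : IsEssLinePlane Γ) (M : ℝ) :
    ∃ m : ℝ, 0 ≤ m ∧ ∀ x y, |y| ≤ M → m ≤ x → ((x, y) : Plane) ∉ Lset (range Γ) := by
  obtain ⟨m, hm, hb⟩ := ess_bdd h |M|
  obtain ⟨m', hm', hn⟩ := not_mem_Lset_zero h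
  refine ⟨max m m', by positivity, fun x y hy hx hmem => ?_⟩
  have hconv : Convex ℝ (Ici m ×ˢ Icc (-|M|) |M|) := (convex_Ici _).prod (convex_Icc _ _)
  have hM := le_abs_self M
  have hM' := abs_nonneg M
  have hyy := abs_le.1 hy
  have hxm : m ≤ x := le_trans (le_max_left _ _) hx
  apply hn x (le_trans (le_max_right _ _) hx)
  apply subset_Lset h hconv.isPreconnected _ (z := (x, y)) _ hmem
  · exact ⟨hxm, by simp⟩
  · rintro ⟨u, v⟩ ⟨hu, hv⟩ ⟨t, ht⟩
    have := hb t (by rw [ht]; exact abs_le.2 hv)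
    rw [ht] at this
    have := (abs_lt.1 this).2
    simp only [mem_Ici] at hu
    simp only at this
    linarith
  · exact ⟨hxm, by constructor <;> simp <;> linarith⟩

/-- The final argument: the line `G` between `U` and `H(U)` satisfies `G < H(G)`. -/
lemma final_lt (H : Plane ≃ₜ Plane) (hH : EssentialHomeo H) (U : Set Plane)
    (hU : IsPreconnected U) {Γ : ℝ → Plane} (hΓ : IsEssLinePlane Γ) (hLU : Lset (range Γ) ⊆ U)
    {G : ℝ → Plane} (hG : IsEssLinePlane G) (hGV : range G ⊆ H '' U) (hGU : U ⊆ (range G)ᶜ) :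
    lineLT (range G) (H '' range G) := by
  have hK : IsEssLinePlane (⇑H ∘ G) := hH.1 G hG
  have hKL := hH.2 G hG
  unfold lineLT
  rw [← range_comp]
  set K := ⇑H ∘ G with hKdef
  -- far left points
  have far : ∀ {A : ℝ → Plane}, IsEssLinePlane A → ∀ {B : ℝ → Plane}, IsEssLinePlane B →
      ∃ z : Plane, z ∈ Lset (range A) ∧ z ∈ Lset (range B) := by
    intro A hA B hB
    obtain ⟨a, -, ha⟩ := mem_Lset_left hA 0
    obtain ⟨b, -, hb⟩ := mem_Lset_left hB 0
    exact ⟨(-(max a b), 0), ha _ _ (by simp) (by simp), hb _ _ (by simp) (by simp)⟩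
  have hUL : U ⊆ Lset (range G) := by
    obtain ⟨z, hz1, hz2⟩ := far hΓ hG
    exact subset_Lset hG hU hGU (hLU hz1) hz2
  have hGK : range G ⊆ Lset (range K) := by
    rw [← hKL]
    exact hGV.trans (image_mono hUL)
  have hdisj : ∀ t s, K t ≠ G s := by
    intro t s hts
    exact Lset_disj hK (hGK ⟨s, rfl⟩) ⟨t, hts⟩
  have hKpre : IsPreconnected (range K) := isPreconnected_range hK.1
  have hKG : range K ⊆ (range G)ᶜ := by
    rintro _ ⟨t, rfl⟩ ⟨s, hs⟩
    exact hdisj t s hs.symm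
  by_cases hcase : ∃ t, K t ∈ Lset (range G)
  · exfalso
    obtain ⟨t, ht⟩ := hcase
    have hKL' : range K ⊆ Lset (range G) := subset_Lset hG hKpre hKG ⟨t, rfl⟩ ht
    -- rightmost point of `G` on the axis
    have hex : ∃ t, (G t).2 = 0 :=
      mem_range_of_exists_le_of_exists_ge (f := fun t => (G t).2) (c := 0)
        (continuous_snd.comp hG.1)
        ((hG.2.2.2.2.eventually (eventually_le_atBot 0)).exists)
        ((hG.2.2.2.1.eventually (eventually_ge_atTop 0)).exists)
    obtain ⟨m, hm, hb⟩ := ess_bdd hG 0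
    let S : Set ℝ := {x | ((x, 0) : Plane) ∈ range G}
    have hSne : S.Nonempty := by
      obtain ⟨t, ht⟩ := hex
      refine ⟨(G t).1, t, ?_⟩
      ext <;> simp [ht]
    have hSbdd : BddAbove S := by
      refine ⟨m, ?_⟩
      rintro x ⟨t, ht⟩
      have := hb t (by rw [ht]; simp)
      rw [ht] at this
      exact (abs_lt.1 this).2.le
    have hScl : IsClosed S := (ess_closed hG).preimage (by fun_prop : Continuous fun x : ℝ =>
      ((x, 0) : Plane))
    have hx₀ := hScl.csSup_mem hSne hSbdd
    set x₀ := sSup S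
    have hray : ∀ x, x₀ < x → ((x, 0) : Plane) ∉ range G := fun x hx hmem =>
      absurd (le_csSup hSbdd hmem) (not_le.2 hx)
    obtain ⟨r, -, hr⟩ := not_mem_Lset_zero hG
    obtain ⟨r', -, hr'⟩ := not_mem_Lset_zero hK
    have hray2 : ∀ x, x₀ < x → ((x, 0) : Plane) ∉ Lset (range G) := by
      intro x hx hmem
      have hpre : IsPreconnected ((fun x : ℝ => ((x, 0) : Plane)) '' Ioi x₀) :=
        isPreconnected_Ioi.image _ (by fun_prop)
      have := subset_Lset hG hpre (by rintro _ ⟨u, hu, rfl⟩; exact hray u hu) ⟨x, hx, rfl⟩ hmem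
      exact hr (max r x) (le_max_left _ _) (this ⟨max r x, lt_max_of_lt_right hx, rfl⟩)
    have hpre2 : IsPreconnected ((fun x : ℝ => ((x, 0) : Plane)) '' Ici x₀) :=
      isPreconnected_Ici.image _ (by fun_prop)
    have hsub : ((fun x : ℝ => ((x, 0) : Plane)) '' Ici x₀) ⊆ (range K)ᶜ := by
      rintro _ ⟨u, hu, rfl⟩ hmem
      rcases eq_or_lt_of_le (show x₀ ≤ u from hu) with h | h
      · exact hKG hmem (h ▸ hx₀)
      · exact hray2 u h (hKL' hmem)
    have := subset_Lset hK hpre2 hsub ⟨x₀, self_mem_Ici, rfl⟩ (hGK hx₀)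
    exact hr' (max r' x₀) (le_max_left _ _) (this ⟨max r' x₀, mem_Ici.2 (le_max_right _ _), rfl⟩)
  · push Not at hcase
    have hcl : closure (Lset (range G)) ⊆ (range K)ᶜ := by
      rintro z hz ⟨t, rfl⟩
      apply hcase t
      have hop : IsOpen (connectedComponentIn (range G)ᶜ (K t)) :=
        (ess_closed hG).isOpen_compl.connectedComponentIn
      have hmem : K t ∈ connectedComponentIn (range G)ᶜ (K t) :=
        mem_connectedComponentIn (hKG ⟨t, rfl⟩)
      obtain ⟨w, hw1, hw2⟩ := mem_closure_iff.1 hz _ hop hmem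
      exact subset_Lset hG isPreconnected_connectedComponentIn (connectedComponentIn_subset _ _)
        hw1 hw2 hmem
    obtain ⟨z, hz1, hz2⟩ := far hG hK
    exact subset_Lset hK (Lset_preconn hG).closure hcl (subset_closure hz1) hz2

/-- `U` is covered by finitely many left regions of essential lines. -/
def RB (U : Set Plane) : Prop :=
  ∃ n : ℕ, ∃ A : Fin n → ℝ → Plane, (∀ k, IsEssLinePlane (A k)) ∧ U ⊆ ⋃ k, Lset (range (A k))

lemma RB.mono {U V : Set Plane} (h : RB V) (hUV : U ⊆ V) : RB U := by
  obtain ⟨n, A, hA, hV⟩ := h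
  exact ⟨n, A, hA, hUV.trans hV⟩

lemma RB.image {U : Set Plane} (h : RB U) {H : Plane ≃ₜ Plane} (hH : EssentialHomeo H) :
    RB (H '' U) := by
  obtain ⟨n, A, hA, hV⟩ := h
  refine ⟨n, fun k => H ∘ A k, fun k => hH.1 _ (hA k), ?_⟩
  refine (image_mono hV).trans ?_
  rw [image_iUnion]
  exact iUnion_mono fun k => (hH.2 _ (hA k)).le

lemma RB.image_iterate {U : Set Plane} (h : RB U) {H : Plane ≃ₜ Plane} (hH : EssentialHomeo H)
    (k : ℕ) : RB ((⇑H)^[k] '' U) := by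
  induction k with
  | zero => simpa using h
  | succ k ih =>
    rw [Function.iterate_succ', image_comp]
    exact ih.image hH

lemma RB.union {U V : Set Plane} (h : RB U) (h' : RB V) : RB (U ∪ V) := by
  obtain ⟨n, A, hA, hU⟩ := h
  obtain ⟨m, B, hB, hV⟩ := h'
  refine ⟨n + m, Fin.append A B, ?_, ?_⟩
  · intro k
    refine Fin.addCases (fun i => ?_) (fun i => ?_) k
    · rw [Fin.append_left]; exact hA i
    · rw [Fin.append_right]; exact hB i
  · rintro z (hz | hz)
    · obtain ⟨i, hi⟩ := mem_iUnion.1 (hU hz)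
      exact mem_iUnion.2 ⟨Fin.castAdd m i, by rwa [Fin.append_left]⟩
    · obtain ⟨i, hi⟩ := mem_iUnion.1 (hV hz)
      exact mem_iUnion.2 ⟨Fin.natAdd n i, by rwa [Fin.append_right]⟩

lemma RB.biUnion {W : ℕ → Set Plane} (n : ℕ) (h : ∀ k < n, RB (W k)) :
    RB (⋃ k ∈ Finset.range n, W k) := by
  induction n with
  | zero => exact ⟨0, fun _ _ => 0, fun k => k.elim0, by simp⟩
  | succ n ih =>
    rw [Finset.range_add_one, Finset.set_biUnion_insert]
    exact (h n (by omega)).union (ih fun k hk => h k (by omega))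

lemma RB.bound {U : Set Plane} (h : RB U) (M : ℝ) :
    ∃ m : ℝ, 0 ≤ m ∧ ∀ x y, |y| ≤ M → m ≤ x → ((x, y) : Plane) ∉ U := by
  obtain ⟨n, A, hA, hU⟩ := h
  choose m hm hm' using fun k => not_mem_Lset_right (hA k) M
  refine ⟨∑ k, m k, Finset.sum_nonneg fun k _ => hm k, fun x y hy hx hmem => ?_⟩
  obtain ⟨k, hk⟩ := mem_iUnion.1 (hU hmem)
  exact hm' k x y hy (le_trans (Finset.single_le_sum (fun k _ => hm k) (Finset.mem_univ k)) hx) hk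

lemma essential_iterate {H : Plane ≃ₜ Plane} (hH : EssentialHomeo H) (k : ℕ)
    {Γ : ℝ → Plane} (hΓ : IsEssLinePlane Γ) :
    IsEssLinePlane ((⇑H)^[k] ∘ Γ) ∧
      (⇑H)^[k] '' Lset (range Γ) = Lset (range ((⇑H)^[k] ∘ Γ)) := by
  induction k with
  | zero => simpa using hΓ
  | succ k ih =>
    rw [Function.iterate_succ', image_comp, ih.2]
    exact ⟨hH.1 _ ih.1, hH.2 _ ih.1⟩

lemma iterate_homeo (H : Plane ≃ₜ Plane) (k : ℕ) : ∃ h : Plane ≃ₜ Plane, ⇑h = (⇑H)^[k] := by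
  induction k with
  | zero => exact ⟨Homeomorph.refl _, rfl⟩
  | succ k ih =>
    obtain ⟨h, hh⟩ := ih
    refine ⟨h.trans H, ?_⟩
    rw [Function.iterate_succ', ← hh]; rfl

lemma closure_iterate (H : Plane ≃ₜ Plane) (k : ℕ) (S : Set Plane) :
    closure ((⇑H)^[k] '' S) = (⇑H)^[k] '' closure S := by
  obtain ⟨h, hh⟩ := iterate_homeo H k
  rw [← hh, h.image_closure]

lemma open_iterate (H : Plane ≃ₜ Plane) (k : ℕ) {S : Set Plane} (hS : IsOpen S) :
    IsOpen ((⇑H)^[k] '' S) := by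
  obtain ⟨h, hh⟩ := iterate_homeo H k
  rw [← hh, h.isOpen_image]
  exact hS

/-- One step of the induction: replace the exponent of `H i₀` by `1`. -/
lemma one_step {p : ℕ} (H : Fin p → (Plane ≃ₜ Plane)) (r : Fin p → ℕ)
    (hcomm : ∀ i j : Fin p, ∀ z : Plane, H i (H j z) = H j (H i z))
    (hess : ∀ i, EssentialHomeo (H i)) (i₀ : Fin p) (hr : 0 < r i₀)
    (U : Set Plane) (hU : IsOpen U) (hRB : RB U)
    (hlt : ∀ i, closure U ⊆ (⇑(H i))^[r i] '' U) :
    ∃ U' : Set Plane, IsOpen U' ∧ RB U' ∧ U ⊆ U' ∧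
      (∀ i, i ≠ i₀ → closure U' ⊆ (⇑(H i))^[r i] '' U') ∧ closure U' ⊆ H i₀ '' U' := by
  obtain ⟨q, hq⟩ : ∃ q, r i₀ = q + 1 := ⟨r i₀ - 1, by omega⟩
  set V : Set Plane := ⋂ i, (⇑(H i))^[r i] '' U with hV
  have hVo : IsOpen V := isOpen_iInter_of_finite fun i => open_iterate (H i) _ hU
  have hUV : closure U ⊆ V := subset_iInter hlt
  obtain ⟨f, hf0, hf1, -⟩ := exists_continuous_zero_one_of_isClosed
    (isClosed_closure (s := U)) hVo.isClosed_compl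
    (disjoint_left.2 fun z hz hz' => hz' (hUV hz))
  have hfV : ∀ z, f z < 1 → z ∈ V := by
    intro z hz
    by_contra hzV
    have := hf1 hzV
    simp only [Pi.one_apply] at this
    linarith
  let L : ℕ → Set Plane := fun j => U ∪ {z | f z < (j : ℝ) / (q + 1)}
  have hq1 : (0 : ℝ) < q + 1 := by positivity
  have hLo : ∀ j, IsOpen (L j) := fun j => hU.union (isOpen_lt f.continuous continuous_const)
  have hcl : ∀ j, ∀ z ∈ closure (L j), f z ≤ (j : ℝ) / (q + 1) := by
    intro j
    have hle : L j ⊆ {z | f z ≤ (j : ℝ) / (q + 1)} := by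
      rintro z (hz | hz)
      · have := hf0 (subset_closure hz)
        simp only [Pi.zero_apply] at this
        rw [mem_ofPred_eq, this]
        positivity
      · rw [mem_ofPred_eq] at hz ⊢
        exact hz.le
    exact closure_minimal hle (isClosed_le f.continuous continuous_const)
  have hLL : ∀ j, closure (L j) ⊆ L (j + 1) := by
    intro j z hz
    right
    refine lt_of_le_of_lt (hcl j z hz) ?_
    push_cast
    gcongr
    linarith
  have hLV : ∀ j, j ≤ q → closure (L j) ⊆ V := by
    intro j hj z hz
    apply hfV
    refine lt_of_le_of_lt (hcl j z hz) ?_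
    rw [div_lt_one hq1]
    have : (j : ℝ) ≤ q := by exact_mod_cast hj
    linarith
  have hUL : ∀ j, U ⊆ L j := fun j => subset_union_left
  let U' : Set Plane := ⋃ k ∈ Finset.range (q + 1), (⇑(H i₀))^[k] '' L (q - k)
  have hmemU' : ∀ k ≤ q, (⇑(H i₀))^[k] '' L (q - k) ⊆ U' := fun k hk =>
    Finset.subset_set_biUnion_of_mem (f := fun k => (⇑(H i₀))^[k] '' L (q - k))
      (Finset.mem_range.2 (by omega))
  have hclU' : closure U' = ⋃ k ∈ Finset.range (q + 1), (⇑(H i₀))^[k] '' closure (L (q - k)) := by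
    rw [Finset.closure_biUnion]
    simp only [closure_iterate]
  have hcomm' : ∀ i k, Function.Commute ((⇑(H i))^[r i]) ((⇑(H i₀))^[k]) := by
    intro i k
    apply Function.Commute.iterate_iterate
    exact fun z => hcomm i i₀ z
  refine ⟨U', ?_, ?_, ?_, ?_, ?_⟩
  · exact isOpen_biUnion fun k _ => open_iterate _ _ (hLo _)
  · apply RB.biUnion
    intro k hk
    apply RB.image_iterate _ (hess i₀)
    refine RB.mono (hRB.image_iterate (hess i₀) (r i₀)) ?_
    exact subset_closure.trans ((hLV (q - k) (by omega)).trans (iInter_subset _ i₀))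
  · have := hmemU' 0 (by omega)
    simp only [Function.iterate_zero, image_id] at this
    exact (hUL _).trans this
  · intro i hi
    rw [hclU']
    refine iUnion₂_subset fun k hk => ?_
    have hk' : k ≤ q := by have := Finset.mem_range.1 hk; omega
    have h1 : closure (L (q - k)) ⊆ (⇑(H i))^[r i] '' L (q - k) :=
      (hLV _ (by omega)).trans ((iInter_subset _ i).trans (image_mono (hUL _)))
    refine (image_mono h1).trans ?_
    rw [← image_comp, ← (hcomm' i k).comp_eq, image_comp]
    exact image_mono (hmemU' k hk')
  · rw [hclU']
    refine iUnion₂_subset fun k hk => ?_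
    have hk' : k ≤ q := by have := Finset.mem_range.1 hk; omega
    rcases Nat.eq_zero_or_pos k with rfl | hkpos
    · simp only [Function.iterate_zero, image_id]
      have h1 : closure (L (q - 0)) ⊆ (⇑(H i₀))^[r i₀] '' U :=
        (hLV _ (by omega)).trans (iInter_subset _ i₀)
      refine h1.trans ?_
      rw [hq, Function.iterate_succ', image_comp]
      exact image_mono ((image_mono (hUL _)).trans (hmemU' q le_rfl))
    · obtain ⟨k, rfl⟩ : ∃ k', k = k' + 1 := ⟨k - 1, by omega⟩
      have h1 := hLL (q - (k + 1))
      rw [show q - (k + 1) + 1 = q - k by omega] at h1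
      refine (image_mono h1).trans ?_
      rw [Function.iterate_succ', image_comp]
      exact image_mono (hmemU' k (by omega))

lemma all_steps {p : ℕ} (H : Fin p → (Plane ≃ₜ Plane)) (q : Fin p → ℕ)
    (hq : ∀ i, 0 < q i)
    (hcomm : ∀ i j : Fin p, ∀ z : Plane, H i (H j z) = H j (H i z))
    (hess : ∀ i, EssentialHomeo (H i))
    (U : Set Plane) (hU : IsOpen U) (hRB : RB U)
    (hlt : ∀ i, closure U ⊆ (⇑(H i))^[q i] '' U) (s : Finset (Fin p)) :
    ∃ U' : Set Plane, IsOpen U' ∧ RB U' ∧ U ⊆ U' ∧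
      (∀ i, closure U' ⊆ (⇑(H i))^[if i ∈ s then 1 else q i] '' U') := by
  induction s using Finset.induction_on with
  | empty => exact ⟨U, hU, hRB, Subset.rfl, by simpa using hlt⟩
  | insert a s ha ih =>
    obtain ⟨U', hU', hRB', hUU', hlt'⟩ := ih
    obtain ⟨U'', h1, h2, h3, h4, h5⟩ := one_step H (fun i => if i ∈ s then 1 else q i) hcomm hess a
      (by simpa [ha] using hq a) U' hU' hRB' hlt'
    refine ⟨U'', h1, h2, hUU'.trans h3, fun i => ?_⟩
    by_cases hi : i = a
    · subst hi
      simpa using h5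
    · have := h4 i hi
      simpa [hi] using this

/-- Rotation by 60 degrees of the triangular lattice `ℤ²`. -/
def rot (d : ℤ × ℤ) : ℤ × ℤ := (-d.2, d.1 + d.2)

/-- Inverse rotation. -/
def rinv (d : ℤ × ℤ) : ℤ × ℤ := (d.1 + d.2, -d.1)

/-- The six directions of the triangular lattice. -/
def isDir (d : ℤ × ℤ) : Prop :=
  -1 ≤ d.1 ∧ d.1 ≤ 1 ∧ -1 ≤ d.2 ∧ d.2 ≤ 1 ∧ -1 ≤ d.1 + d.2 ∧ d.1 + d.2 ≤ 1 ∧ (d.1 ≠ 0 ∨ d.2 ≠ 0)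

/-- A state of the interface: an edge from the base point in a direction. -/
abbrev St := (ℤ × ℤ) × (ℤ × ℤ)

/-- Valid states are edges from a black vertex to a white one. -/
def Valid (c : ℤ × ℤ → Prop) (s : St) : Prop := c s.1 ∧ ¬ c (s.1 + s.2) ∧ isDir s.2

open Classical in
/-- Next edge on the interface. -/
def fwd (c : ℤ × ℤ → Prop) (s : St) : St :=
  if c (s.1 + rot s.2) then (s.1 + rot s.2, rinv s.2) else (s.1, rot s.2)

open Classical in
/-- Previous edge on the interface. -/
def bwd (c : ℤ × ℤ → Prop) (s : St) : St :=
  if c (s.1 + rinv s.2) then (s.1 + rinv s.2, rot s.2) else (s.1, rinv s.2)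

lemma isDir_rot {d : ℤ × ℤ} (h : isDir d) : isDir (rot d) := by
  unfold isDir rot at *; simp only; omega

lemma isDir_rinv {d : ℤ × ℤ} (h : isDir d) : isDir (rinv d) := by
  unfold isDir rinv at *; simp only; omega

lemma rot_rinv (d : ℤ × ℤ) : rot (rinv d) = d := by
  ext <;> simp [rot, rinv]

lemma rinv_rot (d : ℤ × ℤ) : rinv (rot d) = d := by
  ext <;> simp [rot, rinv]

lemma rot_add_rinv (d : ℤ × ℤ) : rot d + rinv d = d := by
  ext <;> simp [rot, rinv]

lemma rinv_rinv (d : ℤ × ℤ) : rinv (rinv d) = - rot d := by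
  ext <;> simp [rot, rinv]

lemma rot_rot (d : ℤ × ℤ) : rot (rot d) = - rinv d := by
  ext <;> simp [rot, rinv]

lemma fwd_valid {c : ℤ × ℤ → Prop} {s : St} (h : Valid c s) : Valid c (fwd c s) := by
  obtain ⟨h1, h2, h3⟩ := h
  unfold fwd
  split_ifs with hc
  · refine ⟨hc, ?_, isDir_rinv h3⟩
    simpa only [add_assoc, rot_add_rinv] using h2
  · exact ⟨h1, hc, isDir_rot h3⟩

lemma bwd_valid {c : ℤ × ℤ → Prop} {s : St} (h : Valid c s) : Valid c (bwd c s) := by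
  obtain ⟨h1, h2, h3⟩ := h
  unfold bwd
  split_ifs with hc
  · refine ⟨hc, ?_, isDir_rot h3⟩
    simpa only [add_assoc, add_comm (rinv s.2), rot_add_rinv] using h2
  · exact ⟨h1, hc, isDir_rinv h3⟩

lemma bwd_fwd {c : ℤ × ℤ → Prop} {s : St} (h : Valid c s) : bwd c (fwd c s) = s := by
  obtain ⟨h1, h2, h3⟩ := h
  unfold fwd
  split_ifs with hc
  · unfold bwd
    simp only [rinv_rinv, rot_rinv, add_neg_cancel_right, h1, if_true]
  · unfold bwd
    simp only [rinv_rot, h2, if_false]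

lemma fwd_bwd {c : ℤ × ℤ → Prop} {s : St} (h : Valid c s) : fwd c (bwd c s) = s := by
  obtain ⟨h1, h2, h3⟩ := h
  unfold bwd
  split_ifs with hc
  · unfold fwd
    simp only [rot_rot, rinv_rot, add_neg_cancel_right, h1, if_true]
  · unfold fwd
    simp only [rot_rinv, h2, if_false]

lemma fwd_iter_valid {c : ℤ × ℤ → Prop} {s : St} (h : Valid c s) (k : ℕ) :
    Valid c ((fwd c)^[k] s) := by
  induction k with
  | zero => exact h
  | succ k ih => rw [Function.iterate_succ_apply']; exact fwd_valid ih

lemma bwd_iter_valid {c : ℤ × ℤ → Prop} {s : St} (h : Valid c s) (k : ℕ) :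
    Valid c ((bwd c)^[k] s) := by
  induction k with
  | zero => exact h
  | succ k ih => rw [Function.iterate_succ_apply']; exact bwd_valid ih

lemma fwd_iter_inj {c : ℤ × ℤ → Prop} {s s' : St} (h : Valid c s) (h' : Valid c s') (k : ℕ)
    (he : (fwd c)^[k] s = (fwd c)^[k] s') : s = s' := by
  induction k with
  | zero => exact he
  | succ k ih =>
    rw [Function.iterate_succ_apply', Function.iterate_succ_apply'] at he
    apply ih
    rw [← bwd_fwd (fwd_iter_valid h k), he, bwd_fwd (fwd_iter_valid h' k)]

lemma fwd_row {c : ℤ × ℤ → Prop} {s : St} (h : Valid c s) :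
    (fwd c s).1.2 ≤ s.1.2 + 1 ∧ s.1.2 - 1 ≤ (fwd c s).1.2 := by
  obtain ⟨h1, h2, h3⟩ := h
  unfold isDir at h3
  unfold fwd rot
  split_ifs <;> simp only [Prod.snd_add] <;> omega

lemma bwd_row {c : ℤ × ℤ → Prop} {s : St} (h : Valid c s) :
    (bwd c s).1.2 ≤ s.1.2 + 1 ∧ s.1.2 - 1 ≤ (bwd c s).1.2 := by
  obtain ⟨h1, h2, h3⟩ := h
  unfold isDir at h3
  unfold bwd rinv
  split_ifs <;> simp only [Prod.snd_add] <;> omega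

/-- In every band, the colouring is black far left and white far right. -/
def Band (c : ℤ × ℤ → Prop) : Prop :=
  ∀ n : ℤ, ∃ m : ℤ, ∀ i j : ℤ, -n ≤ j → j ≤ n → (i ≤ -m → c (i, j)) ∧ (m ≤ i → ¬ c (i, j))

lemma band_finite {c : ℤ × ℤ → Prop} (hc : Band c) (n : ℤ) :
    {s : St | Valid c s ∧ -n ≤ s.1.2 ∧ s.1.2 ≤ n}.Finite := by
  obtain ⟨m, hm⟩ := hc (n + 1)
  apply (((Set.finite_Icc (-m - 1) (m + 1)).prod (Set.finite_Icc (-n) n)).prod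
    ((Set.finite_Icc (-1 : ℤ) 1).prod (Set.finite_Icc (-1 : ℤ) 1))).subset
  rintro ⟨⟨i, j⟩, ⟨a, b⟩⟩ ⟨⟨h1, h2, h3⟩, h4, h5⟩
  simp only [isDir, Prod.mk_add_mk] at *
  have e1 : ¬ (m ≤ i) := fun h => (hm i j (by omega) (by omega)).2 h h1
  have e2 : ¬ (i + a ≤ -m) := fun h => h2 ((hm (i + a) (j + b) (by omega) (by omega)).1 h)
  simp only [mem_prod, mem_Icc]
  omega

lemma band_escape {c : ℤ × ℤ → Prop} (hc : Band c) (a : ℕ → St) (ha : Function.Injective a)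
    (hv : ∀ k, Valid c (a k)) (n : ℤ) : ∃ K, ∀ k ≥ K, (a k).1.2 < -n ∨ n < (a k).1.2 := by
  have hfin := (band_finite hc n).preimage (f := a) ha.injOn
  obtain ⟨K, hK⟩ := hfin.bddAbove
  refine ⟨K + 1, fun k hk => ?_⟩
  by_contra hcon
  push Not at hcon
  have := hK (show k ∈ a ⁻¹' _ from ⟨hv k, hcon.1, hcon.2⟩)
  omega

/-- The colouring modified to be standard below row `-n`. -/
def cut (c : ℤ × ℤ → Prop) (n : ℤ) (z : ℤ × ℤ) : Prop :=
  (-n ≤ z.2 ∧ c z) ∨ (z.2 < -n ∧ z.1 ≤ 0)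

lemma cut_band {c : ℤ × ℤ → Prop} (hc : Band c) (n : ℤ) : Band (cut c n) := by
  intro N
  obtain ⟨m, hm⟩ := hc N
  refine ⟨max m 1, fun i j h1 h2 => ⟨fun h => ?_, fun h => ?_⟩⟩
  · have := (hm i j h1 h2).1 (by omega)
    unfold cut
    by_cases hj : -n ≤ j
    · exact Or.inl ⟨hj, this⟩
    · right; simp only; omega
  · have := (hm i j h1 h2).2 (by omega)
    rintro (⟨h3, h4⟩ | ⟨h3, h4⟩)
    · exact this h4
    · simp only at h4; omega

lemma cut_agree {c : ℤ × ℤ → Prop} {n : ℤ} {z : ℤ × ℤ} (h : -n ≤ z.2) : cut c n z ↔ c z := by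
  unfold cut
  constructor
  · rintro (⟨-, h2⟩ | ⟨h1, -⟩)
    · exact h2
    · omega
  · exact fun h' => Or.inl ⟨h, h'⟩

lemma cut_low {c : ℤ × ℤ → Prop} {n : ℤ} {z : ℤ × ℤ} (h : z.2 < -n) : cut c n z ↔ z.1 ≤ 0 := by
  unfold cut
  constructor
  · rintro (⟨h2, -⟩ | ⟨-, h1⟩)
    · omega
    · exact h1
  · exact fun h' => Or.inr ⟨h, h'⟩

lemma fwd_B {c : ℤ × ℤ → Prop} {n j : ℤ} (h : j < -n) :
    fwd (cut c n) ((0, j), (1, -1)) = ((0, j), (1, 0)) := by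
  have : ¬ cut c n ((0, j) + rot (1, -1)) := by
    rw [cut_low (by simp [rot]; omega)]
    simp [rot]
  simp only [fwd, this, if_false]
  simp [rot]

lemma fwd_A {c : ℤ × ℤ → Prop} {n j : ℤ} (h : j + 1 < -n) :
    fwd (cut c n) ((0, j), (1, 0)) = ((0, j + 1), (1, -1)) := by
  have : cut c n ((0, j) + rot (1, 0)) := by
    rw [cut_low (by simp [rot]; omega)]
    simp [rot]
  simp only [fwd, this, if_true]
  simp [rot, rinv]

lemma fwd_A_iter {c : ℤ × ℤ → Prop} {n J : ℤ} (h : J < -n) (k : ℕ) :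
    (fwd (cut c n))^[2 * k] ((0, J - k), (1, 0)) = ((0, J), (1, 0)) := by
  induction k with
  | zero => simp
  | succ k ih =>
    rw [show 2 * (k + 1) = 2 * k + 1 + 1 by ring, Function.iterate_succ_apply,
      Function.iterate_succ_apply]
    rw [fwd_A (by push_cast; omega), fwd_B (by push_cast; omega)]
    rw [show J - ((k + 1 : ℕ) : ℤ) + 1 = J - k by push_cast; ring]
    exact ih

lemma low_reach {c : ℤ × ℤ → Prop} {n J : ℤ} (h : J + 1 < -n) {s : St} (hs : Valid (cut c n) s)
    (hrow : s.1.2 ≤ J) : ∃ k, (fwd (cut c n))^[k] s = ((0, J), (1, 0)) := by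
  obtain ⟨⟨i, j⟩, ⟨a, b⟩⟩ := s
  obtain ⟨h1, h2, h3⟩ := hs
  simp only [isDir, Prod.mk_add_mk] at *
  rw [cut_low (by simp only; omega)] at h1
  rw [cut_low (by simp only; omega)] at h2
  simp only at h1 h2
  obtain ⟨k, hk⟩ : ∃ k : ℕ, J - k = j := ⟨(J - j).toNat, by omega⟩
  have hi : i = 0 := by omega
  have ha : a = 1 := by omega
  subst hi ha
  have hb : b = 0 ∨ b = -1 := by omega
  rcases hb with rfl | rfl
  · exact ⟨2 * k, by rw [← hk]; exact fwd_A_iter (by omega) k⟩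
  · refine ⟨2 * k + 1, ?_⟩
    rw [Function.iterate_succ_apply, fwd_B (by omega), ← hk]
    exact fwd_A_iter (by omega) k

lemma A_valid {c : ℤ × ℤ → Prop} {n j : ℤ} (h : j < -n) : Valid (cut c n) ((0, j), (1, 0)) := by
  refine ⟨?_, ?_, ?_⟩
  · rw [cut_low (by simpa using h)]
  · rw [cut_low (by simpa using h)]; simp
  · simp [isDir]

/-- The interface of the cut colouring, from below `-n` up to infinity, gives an edge on row `0`. -/
lemma seg {c : ℤ × ℤ → Prop} (hc : Band c) (n : ℤ) (hn : 2 ≤ n) :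
    ∃ e : St, Valid c e ∧ e.1.2 = 0 ∧ (∀ k ≥ 1, 1 ≤ ((fwd c)^[k] e).1.2) ∧
      ∃ k, ((bwd c)^[k] e).1.2 ≤ -n + 3 := by
  set c' := cut c n with hc'
  set J := -n - 3 with hJ
  set s₀ : St := ((0, J), (1, 0)) with hs₀
  have hv0 : Valid c' s₀ := A_valid (by omega)
  have hv : ∀ k, Valid c' ((fwd c')^[k] s₀) := fwd_iter_valid hv0
  have hnp : ∀ m, 0 < m → (fwd c')^[m] s₀ ≠ s₀ := by
    intro m hm hper
    have h1 := fwd_A_iter (c := c) (n := n) (J := J) (by omega) m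
    have h2 : (fwd c')^[2 * m] s₀ = s₀ := by
      rw [two_mul, Function.iterate_add_apply, hper, hper]
    have h3 := fwd_iter_inj (c := c') (A_valid (by omega)) hv0 (2 * m) (h1.trans h2.symm)
    have h4 := congrArg (fun s : St => s.1.2) h3
    simp only [hs₀] at h4
    omega
  have hinj : Function.Injective (fun k => (fwd c')^[k] s₀) := by
    have aux : ∀ i j, i < j → (fwd c')^[i] s₀ ≠ (fwd c')^[j] s₀ := by
      intro i j hij h
      obtain ⟨d, rfl⟩ : ∃ d, j = i + d := ⟨j - i, by omega⟩
      rw [Function.iterate_add_apply] at h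
      exact hnp d (by omega) (fwd_iter_inj hv0 (hv d) i h).symm
    intro i j hij
    rcases lt_trichotomy i j with h | h | h
    · exact absurd hij (aux i j h)
    · exact h
    · exact absurd hij.symm (aux j i h)
  have hlow : ∀ m, J ≤ ((fwd c')^[m] s₀).1.2 := by
    intro m
    by_contra hlt
    push Not at hlt
    obtain ⟨k, hk⟩ := low_reach (J := J) (by omega) (hv m) hlt.le
    rw [← Function.iterate_add_apply] at hk
    have : k + m = 0 := by
      by_contra hne
      exact hnp (k + m) (by omega) hk
    have hm0 : m = 0 := by omega
    subst hm0
    simp [hs₀] at hlt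
  obtain ⟨K, hK⟩ := band_escape (cut_band hc n) _ hinj hv (n + 3)
  have hK' : ∀ k ≥ K, 0 < ((fwd c')^[k] s₀).1.2 := by
    intro k hk
    have h1 := hK k hk
    have h2 := hlow k
    omega
  -- last index on a nonpositive row
  classical
  have hex : ∃ k, ((fwd c')^[k] s₀).1.2 ≤ 0 := ⟨0, by simp [hs₀]; omega⟩
  obtain ⟨m₀, hm₀, hlast⟩ : ∃ m₀, ((fwd c')^[m₀] s₀).1.2 ≤ 0 ∧
      ∀ k > m₀, 0 < ((fwd c')^[k] s₀).1.2 := by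
    have h0 : ((fwd c')^[0] s₀).1.2 ≤ 0 := by simp [hs₀]; omega
    refine ⟨Nat.findGreatest (fun k => ((fwd c')^[k] s₀).1.2 ≤ 0) K,
      Nat.findGreatest_spec (P := fun k => ((fwd c')^[k] s₀).1.2 ≤ 0) (Nat.zero_le K) h0,
      fun k hk => ?_⟩
    by_cases hkK : K ≤ k
    · exact hK' k hkK
    · have := Nat.findGreatest_is_greatest hk (by omega)
      omega
  set e := (fwd c')^[m₀] s₀ with he
  have hev : Valid c' e := hv m₀
  have he0 : e.1.2 = 0 := by
    have h1 := hlast (m₀ + 1) (by omega)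
    rw [Function.iterate_succ_apply', ← he] at h1
    have h2 := fwd_row hev
    omega
  have hev' : Valid c e := by
    obtain ⟨h1, h2, h3⟩ := hev
    have h3' := h3
    unfold isDir at h3'
    refine ⟨(cut_agree (by omega)).1 h1, fun h => h2 ((cut_agree ?_).2 h), h3⟩
    rw [Prod.snd_add]; omega
  have hlast' : ∀ k ≥ 1, 0 < ((fwd c')^[k] e).1.2 := by
    intro k hk
    rw [he, ← Function.iterate_add_apply]
    exact hlast _ (by omega)
  have hfw : ∀ k, (fwd c)^[k] e = (fwd c')^[k] e := by
    intro k
    induction k with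
    | zero => rfl
    | succ k ih =>
      rw [Function.iterate_succ_apply', Function.iterate_succ_apply', ih]
      have hvk := fwd_iter_valid hev k
      have hrow : 0 ≤ ((fwd c')^[k] e).1.2 := by
        rcases Nat.eq_zero_or_pos k with rfl | hk
        · simp [he0]
        · exact (hlast' k hk).le
      set s := (fwd c')^[k] e
      have h3' := isDir_rot hvk.2.2
      unfold isDir at h3'
      have hag : cut c n (s.1 + rot s.2) ↔ c (s.1 + rot s.2) :=
        cut_agree (by rw [Prod.snd_add]; omega)
      simp only [fwd, hc', hag]
  refine ⟨e, hev', he0, fun k hk => ?_, ?_⟩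
  · rw [hfw]; exact hlast' k hk
  · by_contra hcon
    push Not at hcon
    have hbk : ∀ k ≤ m₀, (bwd c)^[k] e = (fwd c')^[m₀ - k] s₀ := by
      intro k
      induction k with
      | zero => intro _; simp [he]
      | succ k ih =>
        intro hk
        have ih' := ih (by omega)
        rw [Function.iterate_succ_apply', ih']
        have hrow := hcon k
        rw [ih'] at hrow
        have hvk := hv (m₀ - k)
        have hpred : bwd c' ((fwd c')^[m₀ - k] s₀) = (fwd c')^[m₀ - (k + 1)] s₀ := by
          rw [show m₀ - k = (m₀ - (k + 1)) + 1 by omega, Function.iterate_succ_apply']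
          exact bwd_fwd (hv _)
        rw [← hpred]
        set s := (fwd c')^[m₀ - k] s₀
        have h3' := isDir_rinv hvk.2.2
        unfold isDir at h3'
        have hag : cut c n (s.1 + rinv s.2) ↔ c (s.1 + rinv s.2) :=
          cut_agree (by rw [Prod.snd_add]; omega)
        simp only [bwd, hc', hag]
    have h1 := hbk m₀ le_rfl
    have h2 := hcon m₀
    rw [h1] at h2
    simp [hs₀] at h2
    omega

/-- The permutation of valid states. -/
def perm (c : ℤ × ℤ → Prop) : Equiv.Perm {s : St // Valid c s} where
  toFun s := ⟨fwd c s.1, fwd_valid s.2⟩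
  invFun s := ⟨bwd c s.1, bwd_valid s.2⟩
  left_inv s := Subtype.ext (bwd_fwd s.2)
  right_inv s := Subtype.ext (fwd_bwd s.2)

lemma perm_pow {c : ℤ × ℤ → Prop} (s : {s : St // Valid c s}) (k : ℕ) :
    ((perm c ^ k) s).1 = (fwd c)^[k] s.1 := by
  induction k with
  | zero => rfl
  | succ k ih =>
    rw [pow_succ', Equiv.Perm.mul_apply, Function.iterate_succ_apply', ← ih]
    rfl

lemma perm_inv_pow {c : ℤ × ℤ → Prop} (s : {s : St // Valid c s}) (k : ℕ) :
    (((perm c)⁻¹ ^ k) s).1 = (bwd c)^[k] s.1 := by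
  induction k with
  | zero => rfl
  | succ k ih =>
    rw [pow_succ', Equiv.Perm.mul_apply, Function.iterate_succ_apply', ← ih]
    rfl

/-- Existence of a bi-infinite interface. -/
lemma comb {c : ℤ × ℤ → Prop} (hc : Band c) :
    ∃ s : ℤ → St, (∀ k, Valid c (s k)) ∧ (∀ k, s (k + 1) = fwd c (s k)) ∧ Function.Injective s ∧
      (∀ N : ℤ, ∃ K : ℤ, ∀ k ≥ K, N < (s k).1.2) ∧ (∀ N : ℤ, ∃ K : ℤ, ∀ k ≤ K, (s k).1.2 < N) := by
  -- pigeonhole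
  obtain ⟨e, hev, he0, hfw, hbw⟩ : ∃ e : St, Valid c e ∧ e.1.2 = 0 ∧
      (∀ k ≥ 1, 1 ≤ ((fwd c)^[k] e).1.2) ∧ ∀ n : ℕ, ∃ k, ((bwd c)^[k] e).1.2 ≤ -n := by
    by_contra hcon
    push Not at hcon
    have hcon' : ∀ e : St, ∃ n : ℕ, Valid c e → e.1.2 = 0 → (∀ k ≥ 1, 1 ≤ ((fwd c)^[k] e).1.2) →
        ∀ k, -(n : ℤ) < ((bwd c)^[k] e).1.2 := by
      intro e
      by_cases h : Valid c e ∧ e.1.2 = 0 ∧ (∀ k ≥ 1, 1 ≤ ((fwd c)^[k] e).1.2)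
      · obtain ⟨n, hn⟩ := hcon e h.1 h.2.1 h.2.2
        exact ⟨n, fun _ _ _ => hn⟩
      · exact ⟨0, fun h1 h2 h3 => absurd ⟨h1, h2, h3⟩ h⟩
    choose N hN using hcon'
    obtain ⟨B, hB⟩ := ((band_finite hc 0).image N).bddAbove
    obtain ⟨e, h1, h2, h3, k, hk⟩ := seg hc (B + 5) (by omega)
    have h4 := hN e h1 h2 h3 k
    have h5 : N e ≤ B := hB ⟨e, ⟨h1, by omega, by omega⟩, rfl⟩
    omega
  let e' : {s : St // Valid c s} := ⟨e, hev⟩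
  let s : ℤ → St := fun k => ((perm c ^ k) e').1
  have hsv : ∀ k, Valid c (s k) := fun k => ((perm c ^ k) e').2
  have hnat : ∀ k : ℕ, s k = (fwd c)^[k] e := by
    intro k
    simp only [s, zpow_natCast]
    exact perm_pow e' k
  have hneg : ∀ k : ℕ, s (-k) = (bwd c)^[k] e := by
    intro k
    simp only [s, zpow_neg, zpow_natCast, ← inv_pow]
    exact perm_inv_pow e' k
  have hinj : Function.Injective s := by
    have aux : ∀ i j : ℤ, i < j → s i ≠ s j := by
      intro i j hij h
      have h1 : (perm c ^ i) e' = (perm c ^ j) e' := Subtype.ext h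
      obtain ⟨d, rfl⟩ : ∃ d : ℕ, j = i + d := ⟨(j - i).toNat, by omega⟩
      rw [zpow_add, Equiv.Perm.mul_apply] at h1
      have h2 := (perm c ^ i).injective h1
      have h3 : e = s d := congrArg Subtype.val h2
      rw [hnat] at h3
      have h4 := hfw d (by omega)
      rw [← h3] at h4
      omega
    intro i j hij
    rcases lt_trichotomy i j with h | h | h
    · exact absurd hij (aux i j h)
    · exact h
    · exact absurd hij.symm (aux j i h)
  refine ⟨s, hsv, ?_, hinj, ?_, ?_⟩
  · intro k
    simp only [s]
    rw [add_comm, zpow_add, zpow_one, Equiv.Perm.mul_apply]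
    rfl
  · intro N
    obtain ⟨K, hK⟩ := band_escape hc (fun k : ℕ => s k) (fun i j h => by
      have := hinj h; exact_mod_cast this) (fun k => hsv k) (max N 0)
    refine ⟨K + 1, fun k hk => ?_⟩
    obtain ⟨k, rfl⟩ : ∃ k' : ℕ, k = k' := ⟨k.toNat, by omega⟩
    have h1 := hK k (by omega)
    have h2 := hfw k (by omega)
    rw [← hnat] at h2
    omega
  · intro N
    obtain ⟨K, hK⟩ := band_escape hc (fun k : ℕ => s (-k)) (fun i j h => by
      have := hinj h; omega) (fun k => hsv _) (max (-N) 1)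
    -- a bound from below for the first `K` steps
    have hbound : ∀ k : ℕ, -(k : ℤ) ≤ (s (-k)).1.2 := by
      intro k
      rw [hneg]
      induction k with
      | zero => simp [he0]
      | succ k ih =>
        rw [Function.iterate_succ_apply']
        have := (bwd_row (bwd_iter_valid hev k)).2
        push_cast
        omega
    obtain ⟨k₀, hk₀⟩ := hbw (K + N.natAbs + 2)
    rw [← hneg] at hk₀
    have hk₀K : K ≤ k₀ := by
      have := hbound k₀
      omega
    have key : ∀ d : ℕ, (s (-((k₀ + d : ℕ) : ℤ))).1.2 < -(max (-N) 1) := by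
      intro d
      induction d with
      | zero => simp only [add_zero]; omega
      | succ d ih =>
        have h1 := hK (k₀ + (d + 1)) (by omega)
        rcases h1 with h1 | h1
        · exact h1
        · exfalso
          rw [hneg] at h1 ih
          rw [← add_assoc, Function.iterate_succ_apply'] at h1
          have := (bwd_row (bwd_iter_valid hev (k₀ + d))).1
          omega
    refine ⟨-(k₀ : ℤ), fun k hk => ?_⟩
    obtain ⟨d, hd⟩ : ∃ d : ℕ, k = -((k₀ + d : ℕ) : ℤ) := ⟨(-k - k₀).toNat, by push_cast; omega⟩
    have := key d
    rw [hd]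
    omega

/-- Piecewise linear interpolation of an integer sequence. -/
def lerp (a : ℤ → ℤ) (t : ℝ) : ℝ :=
  (a ⌊t⌋ : ℝ) + Int.fract t * ((a (⌊t⌋ + 1) : ℝ) - (a ⌊t⌋ : ℝ))

lemma lerp_eq (a : ℤ → ℤ) (k : ℤ) (t : ℝ) (ht : t ∈ Icc (k : ℝ) (k + 1)) :
    lerp a t = (a k : ℝ) + (t - k) * ((a (k + 1) : ℝ) - (a k : ℝ)) := by
  rcases eq_or_lt_of_le ht.2 with h | h
  · have hf : ⌊t⌋ = k + 1 := by rw [h]; exact_mod_cast Int.floor_intCast (k + 1)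
    have hfr : Int.fract t = 0 := by
      rw [Int.fract, hf, h]; push_cast; ring
    unfold lerp
    rw [hfr, hf, h]; ring
  · have hf : ⌊t⌋ = k := Int.floor_eq_iff.2 ⟨ht.1, h⟩
    unfold lerp
    rw [Int.fract, hf]

lemma lerp_cont (a : ℤ → ℤ) : Continuous (lerp a) := by
  have hlf : LocallyFinite (fun k : ℤ => Icc (k : ℝ) (k + 1)) := by
    intro x
    refine ⟨Ioo (x - 1) (x + 1), Ioo_mem_nhds (by linarith) (by linarith), ?_⟩
    apply (Set.finite_Icc (⌊x⌋ - 3) (⌊x⌋ + 3)).subset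
    rintro k ⟨z, ⟨hz1, hz2⟩, hz3, hz4⟩
    have h1 := Int.floor_le x
    have h2 := Int.lt_floor_add_one x
    constructor
    · have : ((⌊x⌋ - 3 : ℤ) : ℝ) ≤ k := by push_cast; linarith
      exact_mod_cast this
    · have : (k : ℝ) ≤ ((⌊x⌋ + 3 : ℤ) : ℝ) := by push_cast; linarith
      exact_mod_cast this
  refine hlf.continuous ?_ (fun k => isClosed_Icc) (fun k => ?_)
  · ext x
    simp only [mem_iUnion, mem_univ, iff_true]
    exact ⟨⌊x⌋, Int.floor_le x, (Int.lt_floor_add_one x).le⟩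
  · refine ContinuousOn.congr (f := fun t : ℝ => (a k : ℝ) + (t - k) * ((a (k + 1) : ℝ) - (a k : ℝ)))
      (by fun_prop) (fun t ht => lerp_eq a k t ht)

lemma lerp_top (a : ℤ → ℤ) (h : ∀ N : ℤ, ∃ K : ℤ, ∀ k ≥ K, N < a k) :
    Tendsto (lerp a) atTop atTop := by
  rw [tendsto_atTop]
  intro B
  obtain ⟨K, hK⟩ := h ⌈B⌉
  filter_upwards [eventually_ge_atTop (K : ℝ)] with t ht
  have h1 : K ≤ ⌊t⌋ := Int.le_floor.2 ht
  have h2 : ((⌈B⌉ : ℤ) : ℝ) ≤ a ⌊t⌋ := by exact_mod_cast (hK ⌊t⌋ h1).le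
  have h3 : ((⌈B⌉ : ℤ) : ℝ) ≤ a (⌊t⌋ + 1) := by exact_mod_cast (hK (⌊t⌋ + 1) (by omega)).le
  have h4 := Int.le_ceil B
  have h5 := Int.fract_nonneg t
  have h6 := Int.fract_lt_one t
  unfold lerp
  nlinarith

lemma lerp_bot (a : ℤ → ℤ) (h : ∀ N : ℤ, ∃ K : ℤ, ∀ k ≤ K, a k < N) :
    Tendsto (lerp a) atBot atBot := by
  rw [tendsto_atBot]
  intro B
  obtain ⟨K, hK⟩ := h ⌊B⌋
  filter_upwards [eventually_lt_atBot (K : ℝ)] with t ht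
  have h1 : ⌊t⌋ < K := Int.floor_lt.2 ht
  have h2 : (a ⌊t⌋ : ℝ) ≤ ((⌊B⌋ : ℤ) : ℝ) := by exact_mod_cast (hK ⌊t⌋ (by omega)).le
  have h3 : (a (⌊t⌋ + 1) : ℝ) ≤ ((⌊B⌋ : ℤ) : ℝ) := by exact_mod_cast (hK (⌊t⌋ + 1) (by omega)).le
  have h4 := Int.floor_le B
  have h5 := Int.fract_nonneg t
  have h6 := Int.fract_lt_one t
  unfold lerp
  nlinarith

lemma dir_cases {d : ℤ × ℤ} (h : isDir d) : d = (1, 0) ∨ d = (0, 1) ∨ d = (-1, 1) ∨ d = (-1, 0) ∨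
    d = (0, -1) ∨ d = (1, -1) := by
  obtain ⟨a, b⟩ := d
  simp only [isDir] at h
  simp only [Prod.mk.injEq]
  omega

lemma int_small {A : ℤ} {x : ℝ} (h : (A : ℝ) = x) (h1 : -2 < x) (h2 : x < 2) :
    A = -1 ∨ A = 0 ∨ A = 1 := by
  have h3 : (-2 : ℤ) < A := by
    have : ((-2 : ℤ) : ℝ) < A := by rw [h]; push_cast; exact h1
    exact_mod_cast this
  have h4 : A < (2 : ℤ) := by
    have : (A : ℝ) < ((2 : ℤ) : ℝ) := by rw [h]; push_cast; exact h2
    exact_mod_cast this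
  omega

/-- Two edges of the triangular lattice only meet in trivial ways. -/
lemma seg_pt (A B : ℤ) (d d' : ℤ × ℤ) (hd : isDir d) (hd' : isDir d') (r r' : ℝ)
    (hr : 0 ≤ r) (hr1 : r < 1) (hr' : 0 ≤ r') (hr1' : r' < 1)
    (hA : (A : ℝ) = r * d.1 - r' * d'.1) (hB : (B : ℝ) = r * d.2 - r' * d'.2) :
    (r = r' ∧ A = 0 ∧ B = 0) ∨ (A = d.1 ∧ B = d.2 ∧ -A = d'.1 ∧ -B = d'.2) := by
  rcases dir_cases hd with rfl | rfl | rfl | rfl | rfl | rfl <;>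
  rcases dir_cases hd' with rfl | rfl | rfl | rfl | rfl | rfl <;>
  push_cast at hA hB <;>
  rcases int_small hA (by linarith) (by linarith) with rfl | rfl | rfl <;>
  rcases int_small hB (by linarith) (by linarith) with rfl | rfl | rfl <;>
  push_cast at hA hB <;>
  first
  | (right; simp; done)
  | (exfalso; linarith)
  | (left; refine ⟨by linarith, rfl, rfl⟩)

lemma lerp_inj (M : ℤ → ℤ × ℤ) (hM : Function.Injective M) (hd : ∀ k, isDir (M (k + 1) - M k)) :
    Function.Injective (fun t : ℝ => (lerp (fun k => (M k).1) t, lerp (fun k => (M k).2) t)) := by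
  intro t t' h
  simp only [Prod.mk.injEq, lerp] at h
  obtain ⟨h1, h2⟩ := h
  have key := seg_pt ((M ⌊t'⌋).1 - (M ⌊t⌋).1) ((M ⌊t'⌋).2 - (M ⌊t⌋).2) _ _ (hd ⌊t⌋) (hd ⌊t'⌋)
    (Int.fract t) (Int.fract t') (Int.fract_nonneg t) (Int.fract_lt_one t) (Int.fract_nonneg t')
    (Int.fract_lt_one t') (by push_cast [Prod.fst_sub]; linarith)
    (by push_cast [Prod.snd_sub]; linarith)
  rcases key with ⟨e1, e2, e3⟩ | ⟨e1, e2, e3, e4⟩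
  · have hk : ⌊t⌋ = ⌊t'⌋ := by
      apply hM
      ext <;> omega
    rw [← Int.floor_add_fract t, ← Int.floor_add_fract t', hk, e1]
  · exfalso
    simp only [Prod.fst_sub, Prod.snd_sub] at e1 e2 e3 e4
    have hk : ⌊t'⌋ = ⌊t⌋ + 1 := by
      apply hM
      ext <;> omega
    have hk' : ⌊t⌋ = ⌊t'⌋ + 1 := by
      apply hM
      ext <;> omega
    omega

lemma ess_of {G : ℝ → Plane} (hc : Continuous G) (hi : Function.Injective G)
    (ht : Tendsto (fun t => (G t).2) atTop atTop) (hb : Tendsto (fun t => (G t).2) atBot atBot) :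
    IsEssLinePlane G := by
  refine ⟨hc, hi, ?_, ht, hb⟩
  rw [isProperMap_iff_tendsto_cocompact]
  refine ⟨hc, ?_⟩
  have h2 : Tendsto (fun t => (G t).2) (cocompact ℝ) (cocompact ℝ) := by
    rw [cocompact_eq_atBot_atTop]
    exact hb.sup_sup ht
  intro S hS
  obtain ⟨K, hK, hKS⟩ := mem_cocompact.1 hS
  have h3 := h2 (hK.image continuous_snd).compl_mem_cocompact
  rw [mem_map] at h3 ⊢
  filter_upwards [h3] with t ht'
  apply hKS
  intro hmem
  exact ht' ⟨_, hmem, rfl⟩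

/-- The interface as an essential line. -/
lemma interface_line {c : ℤ × ℤ → Prop} (hc : Band c) :
    ∃ G : ℝ → Plane, IsEssLinePlane G ∧ ∀ t, ∃ b w : ℤ × ℤ, c b ∧ ¬ c w ∧
      |(G t).1 - b.1| ≤ 1 ∧ |(G t).2 - b.2| ≤ 1 ∧ |(G t).1 - w.1| ≤ 1 ∧ |(G t).2 - w.2| ≤ 1 := by
  obtain ⟨s, hv, hs, hinj, htop, hbot⟩ := comb hc
  let M : ℤ → ℤ × ℤ := fun k => (2 * (s k).1.1 + (s k).2.1, 2 * (s k).1.2 + (s k).2.2)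
  have hM : Function.Injective M := by
    intro i j hij
    apply hinj
    obtain ⟨a1, a2, a3⟩ := hv i
    obtain ⟨b1, b2, b3⟩ := hv j
    simp only [M, Prod.mk.injEq] at hij
    have hcases : s i = s j ∨ (s j).1 = (s i).1 + (s i).2 := by
      simp only [Prod.ext_iff, Prod.fst_add, Prod.snd_add]
      unfold isDir at a3 b3
      omega
    rcases hcases with h | h
    · exact h
    · rw [h] at b1
      exact absurd b1 a2
  have hd : ∀ k, isDir (M (k + 1) - M k) := by
    intro k
    have h3 := (hv k).2.2
    simp only [M, hs]
    unfold isDir at *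
    unfold fwd
    split_ifs <;> simp only [rot, rinv, Prod.fst_add, Prod.snd_add, Prod.fst_sub, Prod.snd_sub] <;>
      omega
  refine ⟨fun t => (lerp (fun k => (M k).1) t / 2, lerp (fun k => (M k).2) t / 2), ?_, ?_⟩
  · apply ess_of
    · exact ((lerp_cont _).div_const 2).prodMk ((lerp_cont _).div_const 2)
    · intro t t' h
      simp only [Prod.mk.injEq] at h
      apply lerp_inj M hM hd
      simp only [Prod.mk.injEq]
      constructor <;> linarith [h.1, h.2]
    · apply Tendsto.atTop_div_const (by norm_num)
      apply lerp_top
      intro N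
      obtain ⟨K, hK⟩ := htop (max N 0 + 1)
      refine ⟨K, fun k hk => ?_⟩
      have h1 := hK k hk
      have h2 := (hv k).2.2
      unfold isDir at h2
      simp only [M]
      omega
    · apply Tendsto.atBot_div_const (by norm_num)
      apply lerp_bot
      intro N
      obtain ⟨K, hK⟩ := hbot (min N 0 - 1)
      refine ⟨K, fun k hk => ?_⟩
      have h1 := hK k hk
      have h2 := (hv k).2.2
      unfold isDir at h2
      simp only [M]
      omega
  · intro t
    refine ⟨(s ⌊t⌋).1, (s ⌊t⌋).1 + (s ⌊t⌋).2, (hv _).1, (hv _).2.1, ?_⟩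
    have h1 := hd ⌊t⌋
    have h2 := (hv ⌊t⌋).2.2
    unfold isDir at h1 h2
    obtain ⟨a1, a2, a3, a4, -, -, -⟩ := h1
    obtain ⟨b1, b2, b3, b4, -, -, -⟩ := h2
    have r0 := Int.fract_nonneg t
    have r1 := (Int.fract_lt_one t).le
    have prodb : ∀ z : ℤ, -1 ≤ z → z ≤ 1 → |Int.fract t * (z : ℝ)| ≤ 1 := by
      intro z h1 h2
      have h3 : |(z : ℝ)| ≤ 1 := by
        rw [abs_le]; exact ⟨by exact_mod_cast h1, by exact_mod_cast h2⟩
      rw [abs_mul, abs_of_nonneg r0]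
      exact mul_le_one₀ r1 (abs_nonneg _) h3
    have p1 := abs_le.1 (prodb _ a1 a2)
    have p2 := abs_le.1 (prodb _ a3 a4)
    simp only [Prod.fst_sub, Prod.snd_sub, Int.cast_sub] at p1 p2
    have q1 : (-1 : ℝ) ≤ (s ⌊t⌋).2.1 := by exact_mod_cast b1
    have q2 : ((s ⌊t⌋).2.1 : ℝ) ≤ 1 := by exact_mod_cast b2
    have q3 : (-1 : ℝ) ≤ (s ⌊t⌋).2.2 := by exact_mod_cast b3
    have q4 : ((s ⌊t⌋).2.2 : ℝ) ≤ 1 := by exact_mod_cast b4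
    have m1 : ((M ⌊t⌋).1 : ℝ) = 2 * (s ⌊t⌋).1.1 + (s ⌊t⌋).2.1 := by simp only [M]; push_cast; ring
    have m2 : ((M ⌊t⌋).2 : ℝ) = 2 * (s ⌊t⌋).1.2 + (s ⌊t⌋).2.2 := by simp only [M]; push_cast; ring
    simp only [lerp, Prod.fst_add, Prod.snd_add, Int.cast_add, abs_le]
    refine ⟨⟨?_, ?_⟩, ⟨?_, ?_⟩, ⟨?_, ?_⟩, ⟨?_, ?_⟩⟩ <;> linarith [p1.1, p1.2, p2.1, p2.2]

/-- `f` is `0` far left and `1` far right in each band. -/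
def SepLR (f : ℝ → ℝ → ℝ) : Prop :=
  ∀ M : ℝ, ∃ m : ℝ, 0 ≤ m ∧ ∀ x y, |y| ≤ M → (x ≤ -m → f x y = 0) ∧ (m ≤ x → f x y = 1)

lemma unif {f : ℝ → ℝ → ℝ} (hf : Continuous (fun z : Plane => f z.1 z.2)) (hs : SepLR f) (M : ℝ) :
    ∃ δ > 0, ∀ x x' y y', |y| ≤ M → |x - x'| ≤ δ → |y - y'| ≤ δ → |f x y - f x' y'| ≤ 1 / 8 := by
  obtain ⟨m, hm, hfm⟩ := hs (M + 1)
  have hcomp : IsCompact (Icc (-(m + 2)) (m + 2) ×ˢ Icc (-(M + 1)) (M + 1)) :=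
    isCompact_Icc.prod isCompact_Icc
  have huc := hcomp.uniformContinuousOn_of_continuous hf.continuousOn
  obtain ⟨δ, hδ, hd⟩ := Metric.uniformContinuousOn_iff_le.1 huc (1 / 8) (by norm_num)
  refine ⟨min δ 1, by positivity, fun x x' y y' hy hx hyy => ?_⟩
  have hx1 := hx.trans (min_le_right _ _)
  have hy1 := hyy.trans (min_le_right _ _)
  have hx2 := hx.trans (min_le_left _ _)
  have hy2 := hyy.trans (min_le_left _ _)
  have hyM : |y| ≤ M + 1 := by linarith
  have hyM' : |y'| ≤ M + 1 := by
    rw [abs_le] at *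
    constructor <;> linarith
  have hx1' := abs_le.1 hx1
  by_cases h1 : m + 1 ≤ x
  · rw [(hfm x y hyM).2 (by linarith), (hfm x' y' hyM').2 (by linarith)]
    norm_num
  by_cases h2 : x ≤ -(m + 1)
  · rw [(hfm x y hyM).1 (by linarith), (hfm x' y' hyM').1 (by linarith)]
    norm_num
  push Not at h1 h2
  have := hd (x, y) ⟨⟨by linarith, by linarith⟩, abs_le.1 hyM⟩ (x', y')
    ⟨⟨by simp only; linarith, by simp only; linarith⟩, abs_le.1 hyM'⟩ (by
      rw [Prod.dist_eq, Real.dist_eq, Real.dist_eq]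
      exact max_le hx2 hy2)
  rwa [Real.dist_eq] at this

/-- A continuous monotone majorant. -/
lemma kappa (δ : ℕ → ℝ) (hδ : ∀ n, 0 < δ n) : ∃ κ : ℝ → ℝ, Continuous κ ∧ Monotone κ ∧
    (∀ r, 0 ≤ r → 1 ≤ κ r) ∧ ∀ r, 0 ≤ r → 1 / δ ⌈r⌉₊ ≤ κ r := by
  let K : ℝ → ℝ := fun t => ∑ k ∈ Finset.range (⌈t⌉₊ + 1), 1 / δ k
  have hpos : ∀ k, 0 ≤ 1 / δ k := fun k => by have := hδ k; positivity
  have hK0 : ∀ t, 0 ≤ K t := fun t => Finset.sum_nonneg fun k _ => hpos k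
  have hKm : Monotone K := by
    intro a b hab
    apply Finset.sum_le_sum_of_subset_of_nonneg
    · apply Finset.range_subset_range.2
      have := Nat.ceil_mono hab
      omega
    · intro k _ _; exact hpos k
  have hIntg : ∀ a b, IntervalIntegrable K MeasureTheory.volume a b := fun a b =>
    hKm.intervalIntegrable
  have hdiff : ∀ a b, (∫ t in (0:ℝ)..b, K t) - (∫ t in (0:ℝ)..a, K t) = ∫ t in a..b, K t :=
    fun a b => intervalIntegral.integral_interval_sub_left (hIntg _ _) (hIntg _ _)
  have hmono : Monotone fun b => ∫ t in (0:ℝ)..b, K t := by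
    intro a b hab
    have h1 := hdiff a b
    have h2 : 0 ≤ ∫ t in a..b, K t := intervalIntegral.integral_nonneg hab fun t _ => hK0 t
    simp only
    linarith
  refine ⟨fun r => 1 + ∫ t in (0:ℝ)..(r + 1), K t, ?_, ?_, ?_, ?_⟩
  · have := intervalIntegral.continuous_primitive hIntg 0
    fun_prop
  · intro a b hab
    have := hmono (show a + 1 ≤ b + 1 by linarith)
    simp only at this ⊢
    linarith
  · intro r hr
    have := hmono (show 0 ≤ r + 1 by linarith)
    simp only [intervalIntegral.integral_same] at this
    simp only
    linarith
  · intro r hr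
    have h0 := hmono hr
    have h1 := hdiff r (r + 1)
    have h2 : ∫ t in r..(r + 1), K r ≤ ∫ t in r..(r + 1), K t :=
      intervalIntegral.integral_mono_on (by linarith) (by simp) (hIntg _ _)
        fun t ht => hKm ht.1
    have h3 : 1 / δ ⌈r⌉₊ ≤ K r :=
      Finset.single_le_sum (f := fun k => 1 / δ k) (fun k _ => hpos k) (by simp)
    simp only [intervalIntegral.integral_same] at h0
    simp only [intervalIntegral.integral_const, smul_eq_mul] at h2
    simp only
    linarith

lemma slow {f : ℝ → ℝ → ℝ} (hf : Continuous (fun z : Plane => f z.1 z.2)) (hs : SepLR f) :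
    ∃ κ : ℝ → ℝ, Continuous κ ∧ Monotone κ ∧ (∀ r, 0 ≤ r → 1 ≤ κ r) ∧
      ∀ x x' y y', |x - x'| ≤ 1 / κ |y| → |y - y'| ≤ 1 / κ |y| → |f x y - f x' y'| ≤ 1 / 8 := by
  choose δ hδ hd using fun n : ℕ => unif hf hs n
  obtain ⟨κ, h1, h2, h3, h4⟩ := kappa δ hδ
  refine ⟨κ, h1, h2, h3, fun x x' y y' hx hy => ?_⟩
  have hle : 1 / κ |y| ≤ δ ⌈|y|⌉₊ := by
    have h5 := h4 |y| (abs_nonneg y)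
    have h6 := hδ ⌈|y|⌉₊
    have h7 : 0 < κ |y| := by linarith [h3 |y| (abs_nonneg y)]
    rw [div_le_iff₀ h6] at h5
    rw [div_le_iff₀ h7]
    linarith
  exact hd ⌈|y|⌉₊ x x' y y' (Nat.le_ceil _) (hx.trans hle) (hy.trans hle)

/-- Interface line for slowly varying functions. -/
lemma line_of_slow {f : ℝ → ℝ → ℝ} (hs : SepLR f)
    (hslow : ∀ x x' y y', |x - x'| ≤ 1 → |y - y'| ≤ 1 → |f x y - f x' y'| ≤ 1 / 4) :
    ∃ G : ℝ → Plane, IsEssLinePlane G ∧ ∀ t, 0 < f (G t).1 (G t).2 ∧ f (G t).1 (G t).2 < 1 := by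
  have hband : Band (fun z : ℤ × ℤ => f z.1 z.2 < 1 / 2) := by
    intro n
    obtain ⟨m, hm, hfm⟩ := hs n
    refine ⟨⌈m⌉, fun i j h1 h2 => ?_⟩
    have hj : |(j : ℝ)| ≤ n := abs_le.2 ⟨by exact_mod_cast h1, by exact_mod_cast h2⟩
    have hce := Int.le_ceil m
    constructor
    · intro hi
      have : (i : ℝ) ≤ ((-⌈m⌉ : ℤ) : ℝ) := by exact_mod_cast hi
      push_cast at this
      simp only
      rw [(hfm i j hj).1 (by linarith)]
      norm_num
    · intro hi
      have : ((⌈m⌉ : ℤ) : ℝ) ≤ i := by exact_mod_cast hi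
      simp only
      rw [(hfm i j hj).2 (by linarith)]
      norm_num
  obtain ⟨G, hG, hGt⟩ := interface_line hband
  refine ⟨G, hG, fun t => ?_⟩
  obtain ⟨b, w, hb, hw, h1, h2, h3, h4⟩ := hGt t
  have e1 := abs_le.1 (hslow _ _ _ _ h1 h2)
  have e2 := abs_le.1 (hslow _ _ _ _ h3 h4)
  push Not at hw
  constructor <;> linarith [e1.1, e1.2, e2.1, e2.2]

/-- A homeomorphism of the line expanding as fast as prescribed. -/
lemma expand (κ : ℝ → ℝ) (hc : Continuous κ) (hm : Monotone κ) (h1 : ∀ r, 0 ≤ r → 1 ≤ κ r) :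
    ∃ ν : ℝ ≃o ℝ, (∀ v, |ν v| ≤ |v|) ∧ ∀ v v', |v - v'| ≤ 1 → |ν v - ν v'| ≤ 1 / κ |ν v| := by
  let μ : ℝ → ℝ := fun y => 2 * (y * κ |y|)
  have hμc : Continuous μ := by fun_prop
  have hκ : ∀ y, 1 ≤ κ |y| := fun y => h1 _ (abs_nonneg y)
  -- lower bound for the growth
  have grow : ∀ y y', y ≤ y' → (y' - y) * κ |y| ≤ μ y' - μ y ∧ (y' - y) * κ |y'| ≤ μ y' - μ y := by
    intro y y' hyy
    have k1 := hκ y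
    have k2 := hκ y'
    simp only [μ]
    rcases le_total 0 y with h | h
    · have h' : 0 ≤ y' := h.trans hyy
      have hmm : κ |y| ≤ κ |y'| := hm (by rw [abs_of_nonneg h, abs_of_nonneg h']; exact hyy)
      constructor <;> nlinarith
    · rcases le_total 0 y' with h' | h'
      · rcases le_total |y| |y'| with h2 | h2
        · have hmm := hm h2
          rw [abs_of_nonpos h, abs_of_nonneg h'] at h2
          constructor <;> nlinarith
        · have hmm := hm h2
          rw [abs_of_nonpos h, abs_of_nonneg h'] at h2
          constructor <;> nlinarith
      · have hmm : κ |y'| ≤ κ |y| := hm (by rw [abs_of_nonpos h, abs_of_nonpos h']; linarith)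
        constructor <;> nlinarith
  have hmono : StrictMono μ := by
    intro y y' hyy
    have := (grow y y' hyy.le).1
    have k1 := hκ y
    nlinarith
  have hμ0 : μ 0 = 0 := by simp [μ]
  have habs : ∀ y, |y| ≤ |μ y| := by
    intro y
    simp only [μ]
    rw [abs_mul, abs_mul, abs_of_pos (by linarith [hκ y] : 0 < κ |y|)]
    have := hκ y
    have := abs_nonneg y
    simp only [Nat.abs_ofNat]
    nlinarith
  have htop : Tendsto μ atTop atTop := by
    refine tendsto_atTop_mono' _ ?_ tendsto_id
    filter_upwards [eventually_ge_atTop 0] with y hy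
    have := (grow 0 y hy).2
    have := hκ y
    simp only [id]
    nlinarith
  have hbot : Tendsto μ atBot atBot := by
    refine tendsto_atBot_mono' _ ?_ tendsto_id
    filter_upwards [eventually_le_atBot 0] with y hy
    have := (grow y 0 hy).1
    have := hκ y
    simp only [id]
    nlinarith
  let e : ℝ ≃o ℝ := hmono.orderIsoOfSurjective μ (hμc.surjective htop hbot)
  have he : ∀ y, e y = μ y := fun y => rfl
  have hev : ∀ v, μ (e.symm v) = v := fun v => by rw [← he]; exact e.apply_symm_apply v
  refine ⟨e.symm, fun v => ?_, fun v v' hv => ?_⟩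
  · have := habs (e.symm v)
    rwa [hev] at this
  · have k1 := hκ (e.symm v)
    rw [le_div_iff₀ (by linarith)]
    refine le_trans ?_ hv
    rcases le_total (e.symm v) (e.symm v') with h | h
    · have g := (grow _ _ h).1
      rw [hev, hev] at g
      rw [abs_of_nonpos (by linarith)]
      have := neg_le_abs (v - v')
      linarith
    · have g := (grow _ _ h).2
      rw [hev, hev] at g
      rw [abs_of_nonneg (by linarith)]
      have := le_abs_self (v - v')
      linarith

/-- Main existence of an essential line in `{0 < f < 1}`. -/
lemma main_line {f : ℝ → ℝ → ℝ} (hf : Continuous (fun z : Plane => f z.1 z.2)) (hs : SepLR f) :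
    ∃ G : ℝ → Plane, IsEssLinePlane G ∧ ∀ t, 0 < f (G t).1 (G t).2 ∧ f (G t).1 (G t).2 < 1 := by
  obtain ⟨κ, kc, km, k1, ks⟩ := slow hf hs
  have hκ : ∀ y : ℝ, 0 < κ |y| := fun y => by linarith [k1 _ (abs_nonneg y)]
  let f₁ : ℝ → ℝ → ℝ := fun u y => f (u / κ |y|) y
  have hcdiv : Continuous (fun z : Plane => z.1 / κ |z.2|) :=
    continuous_fst.div (by fun_prop) (fun z => (hκ _).ne')
  have hf₁ : Continuous (fun z : Plane => f₁ z.1 z.2) := hf.comp (hcdiv.prodMk continuous_snd)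
  have hs₁ : SepLR f₁ := by
    intro M
    obtain ⟨m, hm, hfm⟩ := hs M
    refine ⟨m * κ |M|, mul_nonneg hm (hκ M).le, fun x y hy => ?_⟩
    have hle : κ |y| ≤ κ |M| := km (hy.trans (le_abs_self M))
    have hle' : m * κ |y| ≤ m * κ |M| := mul_le_mul_of_nonneg_left hle hm
    constructor
    · intro hx
      apply (hfm _ y hy).1
      rw [div_le_iff₀ (hκ y)]
      linarith
    · intro hx
      apply (hfm _ y hy).2
      rw [le_div_iff₀ (hκ y)]
      linarith
  obtain ⟨κ', kc', km', k1', ks'⟩ := slow hf₁ hs₁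
  obtain ⟨ν, hν, hν'⟩ := expand κ' kc' km' k1'
  let f₂ : ℝ → ℝ → ℝ := fun u v => f₁ u (ν v)
  have hs₂ : SepLR f₂ := by
    intro M
    obtain ⟨m, hm, hfm⟩ := hs₁ M
    exact ⟨m, hm, fun x y hy => hfm x (ν y) ((hν y).trans hy)⟩
  have hslow : ∀ x x' y y', |x - x'| ≤ 1 → |y - y'| ≤ 1 → |f₂ x y - f₂ x' y'| ≤ 1 / 4 := by
    intro x x' y y' hx hy
    have e1 : |f₁ x (ν y) - f₁ x (ν y')| ≤ 1 / 8 := by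
      apply ks'
      · rw [sub_self, abs_zero]
        have := k1' _ (abs_nonneg (ν y))
        positivity
      · exact hν' y y' hy
    have e2 : |f₁ x (ν y') - f₁ x' (ν y')| ≤ 1 / 8 := by
      apply ks
      · rw [← sub_div, abs_div, abs_of_pos (hκ _)]
        exact div_le_div_of_nonneg_right hx (hκ _).le
      · rw [sub_self, abs_zero]
        have := hκ (ν y')
        positivity
    calc |f₂ x y - f₂ x' y'| ≤ |f₁ x (ν y) - f₁ x (ν y')| + |f₁ x (ν y') - f₁ x' (ν y')| :=
          abs_sub_le _ _ _
      _ ≤ 1 / 4 := by linarith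
  obtain ⟨G, hG, hGt⟩ := line_of_slow hs₂ hslow
  refine ⟨fun t => ((G t).1 / κ |ν (G t).2|, ν (G t).2), ?_, hGt⟩
  obtain ⟨gc, gi, -, gt, gb⟩ := hG
  have hνc : Continuous ν := ν.continuous
  apply ess_of
  · have : Continuous (fun t => ((G t).1, ν (G t).2)) := by fun_prop
    exact (hcdiv.comp this).prodMk (by fun_prop)
  · intro t t' h
    simp only [Prod.mk.injEq] at h
    obtain ⟨h1, h2⟩ := h
    apply gi
    have h3 := ν.injective h2
    rw [h3] at h1
    have h4 := (div_left_inj' (hκ _).ne').1 h1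
    exact Prod.ext h4 h3
  · exact ν.tendsto_atTop.comp gt
  · exact ν.tendsto_atBot.comp gb

/-- Lemma 3.1: if `H₁, …, H_p` are pairwise commuting essential homeomorphisms of ℝ² and
there is an essential line `Γ` with `Γ < H_i^{q_i}(Γ)` for all `i`, then there is an
essential line `Γ'` with `Γ' < H_i(Γ')` for all `i`. -/
theorem commuting_essential_homeos_line
    (p : ℕ) (hp : 0 < p) (H : Fin p → (Plane ≃ₜ Plane)) (q : Fin p → ℕ)
    (hq : ∀ i, 0 < q i)
    (hcomm : ∀ i j : Fin p, ∀ z : Plane, H i (H j z) = H j (H i z))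
    (hess : ∀ i, EssentialHomeo (H i))
    (Γ : ℝ → Plane) (hΓ : IsEssLinePlane Γ)
    (hlt : ∀ i, lineLT (Set.range Γ) ((⇑(H i))^[q i] '' Set.range Γ)) :
    ∃ Γ' : ℝ → Plane, IsEssLinePlane Γ' ∧
      ∀ i, lineLT (Set.range Γ') (⇑(H i) '' Set.range Γ') := by
  have hlt0 : ∀ i, closure (Lset (range Γ)) ⊆ (⇑(H i))^[q i] '' Lset (range Γ) := by
    intro i
    rw [(essential_iterate (hess i) (q i) hΓ).2, range_comp]
    exact hlt i
  have hRB0 : RB (Lset (range Γ)) := by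
    refine ⟨1, fun _ => Γ, fun _ => hΓ, fun z hz => ?_⟩
    exact mem_iUnion.2 ⟨0, hz⟩
  obtain ⟨U', hU'o, hRB, hLU', hcl⟩ :=
    all_steps H q hq hcomm hess _ (Lset_open hΓ) hRB0 hlt0 Finset.univ
  have hcl' : ∀ i, closure U' ⊆ H i '' U' := by
    intro i
    have := hcl i
    simpa using this
  obtain ⟨m0, hm0, hL0⟩ := mem_Lset_left hΓ 0
  have hz0L : ((-m0, 0) : Plane) ∈ Lset (range Γ) := hL0 _ _ (by simp) le_rfl
  set z0 : Plane := (-m0, 0)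
  set U := connectedComponentIn U' z0 with hUdef
  have hUo : IsOpen U := hU'o.connectedComponentIn
  have hUp : IsPreconnected U := isPreconnected_connectedComponentIn
  have hLU : Lset (range Γ) ⊆ U :=
    (Lset_preconn hΓ).subset_connectedComponentIn hz0L hLU'
  have hUU' : U ⊆ U' := connectedComponentIn_subset _ _
  have key : ∀ i, closure U ⊆ H i '' U := by
    intro i
    obtain ⟨m1, hm1, hL1⟩ := mem_Lset_left ((hess i).1 Γ hΓ) 0
    have ha : ((-(max m0 m1), 0) : Plane) ∈ Lset (range Γ) :=
      hL0 _ _ (by simp) (neg_le_neg (le_max_left _ _))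
    have hb : ((-(max m0 m1), 0) : Plane) ∈ Lset (range (H i ∘ Γ)) :=
      hL1 _ _ (by simp) (neg_le_neg (le_max_right _ _))
    rw [← (hess i).2 Γ hΓ] at hb
    have hb2 : ((-(max m0 m1), 0) : Plane) ∈ H i '' U := image_mono hLU hb
    have him : H i '' U = connectedComponentIn (H i '' U') (H i z0) :=
      (H i).image_connectedComponentIn (hLU' hz0L)
    rw [him] at hb2 ⊢
    rw [connectedComponentIn_eq hb2]
    exact hUp.closure.subset_connectedComponentIn (subset_closure (hLU ha))
      ((closure_mono hUU').trans (hcl' i))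
  set V : Set Plane := ⋂ i, H i '' U with hVdef
  have hVo : IsOpen V := isOpen_iInter_of_finite fun i => (H i).isOpenMap _ hUo
  have hUV : closure U ⊆ V := subset_iInter key
  have hVRB : RB V :=
    ((hRB.mono hUU').image (hess ⟨0, hp⟩)).mono (iInter_subset _ (⟨0, hp⟩ : Fin p))
  obtain ⟨f, hf0, hf1, -⟩ := exists_continuous_zero_one_of_isClosed isClosed_closure
    hVo.isClosed_compl (disjoint_compl_right_iff_subset.2 hUV)
  have hs : SepLR (fun x y => f (x, y)) := by
    intro M
    obtain ⟨m1, h1, h1'⟩ := mem_Lset_left hΓ M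
    obtain ⟨m2, h2, h2'⟩ := hVRB.bound M
    refine ⟨max m1 m2, le_max_of_le_left h1, fun x y hy => ⟨fun hx => ?_, fun hx => ?_⟩⟩
    · exact hf0 (subset_closure (hLU (h1' x y hy (hx.trans (neg_le_neg (le_max_left _ _))))))
    · exact hf1 (h2' x y hy ((le_max_right _ _).trans hx))
  obtain ⟨G, hG, hGf⟩ := main_line (f := fun x y => f (x, y)) f.continuous hs
  refine ⟨G, hG, fun i => final_lt (H i) (hess i) U hUp hΓ hLU hG ?_ ?_⟩
  · rintro _ ⟨t, rfl⟩
    have hV : G t ∈ V := by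
      by_contra hn
      have h1 : f (G t) = 1 := hf1 hn
      have h2 : f (G t) < 1 := (hGf t).2
      linarith
    exact mem_iInter.1 hV i
  · rintro _ hz ⟨t, rfl⟩
    have h1 : f (G t) = 0 := hf0 (subset_closure hz)
    have h2 : 0 < f (G t) := (hGf t).1
    linarith
end
end

section
/- If f is a homeomorphism of the open annulus 𝔸 isotopic to the identity and satisfying the intersection property, then for any integer q > 1 the homeomorphism f^q also satisfies the intersection property. -/
open Filter Topology Set

noncomputable section

namespace AnnLog

/-- `u` admits a continuous logarithm. -/
def HasLog {X : Type*} [TopologicalSpace X] (u : X → ℂ) : Prop :=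
  ∃ g : X → ℂ, Continuous g ∧ ∀ x, Complex.exp (g x) = u x

theorem hasLog_mul {X : Type*} [TopologicalSpace X] {u v : X → ℂ} (hu : HasLog u)
    (hv : HasLog v) : HasLog (fun x => u x * v x) := by
  obtain ⟨g, hg, hgu⟩ := hu
  obtain ⟨k, hk, hkv⟩ := hv
  exact ⟨fun x => g x + k x, hg.add hk, fun x => by rw [Complex.exp_add, hgu, hkv]⟩

theorem hasLog_const {X : Type*} [TopologicalSpace X] {a : ℂ} (ha : a ≠ 0) :
    HasLog (fun _ : X => a) :=
  ⟨fun _ => Complex.log a, continuous_const, fun _ => Complex.exp_log ha⟩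

theorem hasLog_near_one {X : Type*} [TopologicalSpace X] {u : X → ℂ} (hu : Continuous u)
    (h : ∀ x, ‖u x - 1‖ < 1) : HasLog u := by
  have hs : ∀ x, u x ∈ Complex.slitPlane := fun x => by
    have := Complex.mem_slitPlane_of_norm_lt_one (h x)
    simpa using this
  exact ⟨fun x => Complex.log (u x), hu.clog hs,
    fun x => Complex.exp_log (Complex.slitPlane_ne_zero (hs x))⟩

theorem hasLog_of_ratio {X : Type*} [TopologicalSpace X] {u v : X → ℂ} (hu : Continuous u)
    (hv : Continuous v) (hu0 : ∀ x, u x ≠ 0) (h : ∀ x, ‖v x / u x - 1‖ < 1) (hl : HasLog u) :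
    HasLog v := by
  have h1 : HasLog (fun x => v x / u x) := hasLog_near_one (hv.div hu hu0) h
  have h2 := hasLog_mul hl h1
  convert h2 using 2 with x
  field_simp [hu0 x]

theorem hasLog_path {T X : Type*} [TopologicalSpace T] [PreconnectedSpace T] [TopologicalSpace X]
    [CompactSpace X] (H : T × X → ℂ) (hH : Continuous H) (h0 : ∀ p, H p ≠ 0) (s t : T)
    (hs : HasLog (fun x => H (s, x))) : HasLog (fun x => H (t, x)) := by
  have hloc : IsLocallyConstant (fun t => HasLog (fun x => H (t, x))) := by
    rw [IsLocallyConstant.iff_eventually_eq]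
    intro t
    have key : ∀ᶠ s in 𝓝 t, ∀ x ∈ (univ : Set X),
        ‖H (s, x) / H (t, x) - 1‖ < 1 ∧ ‖H (t, x) / H (s, x) - 1‖ < 1 := by
      apply isCompact_univ.eventually_forall_of_forall_eventually
      intro y _
      have c1 : Continuous (fun z : T × X => H (t, z.2)) := by fun_prop
      have c2 : Continuous (fun z : T × X => ‖H z / H (t, z.2) - 1‖) :=
        ((hH.div c1 fun z => h0 _).sub continuous_const).norm
      have c3 : Continuous (fun z : T × X => ‖H (t, z.2) / H z - 1‖) :=
        ((c1.div hH fun z => h0 _).sub continuous_const).norm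
      have e2 : ∀ᶠ z in 𝓝 (t, y), ‖H z / H (t, z.2) - 1‖ < 1 := by
        apply c2.continuousAt.eventually_lt continuousAt_const
        simp [div_self (h0 (t, y))]
      have e3 : ∀ᶠ z in 𝓝 (t, y), ‖H (t, z.2) / H z - 1‖ < 1 := by
        apply c3.continuousAt.eventually_lt continuousAt_const
        simp [div_self (h0 (t, y))]
      filter_upwards [e2, e3] with z h2 h3
      exact ⟨h2, h3⟩
    filter_upwards [key] with s hs
    have cs : ∀ s, Continuous fun x => H (s, x) := fun s => by fun_prop
    apply propext
    constructor
    · exact hasLog_of_ratio (cs s) (cs t) (fun x => h0 _) (fun x => (hs x trivial).2)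
    · exact hasLog_of_ratio (cs t) (cs s) (fun x => h0 _) (fun x => (hs x trivial).1)
  have := hloc.apply_eq_of_preconnectedSpace s t
  exact this ▸ hs

theorem hasLog_far {X : Type*} [TopologicalSpace X] {u : X → ℂ} (hu : Continuous u) {p : ℂ}
    (h : ∀ x, ‖u x‖ < ‖p‖) (hp : p ≠ 0) : HasLog (fun x => u x - p) := by
  have hp' : 0 < ‖p‖ := by simpa using hp
  have h1 : HasLog (fun x => 1 - u x / p) := by
    apply hasLog_near_one (by fun_prop)
    intro x
    have : (1 - u x / p - 1) = -(u x / p) := by ring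
    rw [this, norm_neg, norm_div, div_lt_one hp']
    exact h x
  have h2 := hasLog_mul (hasLog_const (X := X) (neg_ne_zero.mpr hp)) h1
  convert h2 using 2 with x
  field_simp
  ring

/-- moving the base point inside a preconnected set missing the curve -/
theorem hasLog_base {X : Type*} [TopologicalSpace X] [CompactSpace X] {u : X → ℂ}
    (hu : Continuous u) {S : Set ℂ} (hS : IsPreconnected S) (hd : ∀ x, u x ∉ S) {p r : ℂ}
    (hp : p ∈ S) (hr : r ∈ S) (h : HasLog fun x => u x - p) : HasLog fun x => u x - r := by
  have : PreconnectedSpace S := isPreconnected_iff_preconnectedSpace.mp hS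
  exact hasLog_path (T := S) (fun z => u z.2 - z.1) (by fun_prop)
    (fun z h => hd z.2 (by rw [sub_eq_zero.mp h]; exact z.1.2)) ⟨p, hp⟩ ⟨r, hr⟩ h

/-- a continuous function with exponential one is constant on preconnected sets -/
theorem exp_one_const {S : Set ℝ} (hS : IsPreconnected S) {h : ℝ → ℂ} (hc : ContinuousOn h S)
    (he : ∀ x ∈ S, Complex.exp (h x) = 1) {x y : ℝ} (hx : x ∈ S) (hy : y ∈ S) : h x = h y := by
  have hpi : (2 * (Real.pi : ℂ) * Complex.I) ≠ 0 := Complex.two_pi_I_ne_zero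
  have key : ∀ z ∈ S, ∃ n : ℤ, h z / (2 * Real.pi * Complex.I) = n := fun z hz => by
    obtain ⟨n, hn⟩ := Complex.exp_eq_one_iff.mp (he z hz)
    exact ⟨n, by rw [hn]; field_simp⟩
  choose! N hN using key
  have cN : ContinuousOn (fun z => ((N z : ℤ) : ℂ)) S :=
    (hc.div_const (2 * Real.pi * Complex.I)).congr fun z hz => (hN z hz).symm
  have cN2 : ContinuousOn (fun z => ((N z : ℤ) : ℝ)) S := by
    have := Complex.continuous_re.comp_continuousOn cN
    simpa [Function.comp_def] using this
  have cN3 : ContinuousOn N S := by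
    exact Int.isClosedEmbedding_coe_real.isInducing.continuousOn_iff.mpr cN2
  have e := hS.constant cN3 hx hy
  have h1 := hN x hx
  have h2 := hN y hy
  rw [e, ← h2] at h1
  field_simp at h1
  exact h1

theorem circle_no_log : ¬ HasLog (fun x : AddCircle (1 : ℝ) => ((AddCircle.toCircle x : Circle) : ℂ)) := by
  rintro ⟨g, hg, he⟩
  have he' : ∀ t : ℝ, Complex.exp (g (t : AddCircle (1 : ℝ)))
      = Complex.exp (2 * Real.pi * t * Complex.I) := fun t => by
    have h2 := congrArg Circle.coeHom (AddCircle.toCircle_apply_mk (T := 1) t)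
    refine (he t).trans (h2.trans ?_)
    refine (Circle.coe_exp _).trans ?_
    push_cast
    congr 1
    ring
  have hc : ContinuousOn (fun t : ℝ => g (t : AddCircle (1 : ℝ)) - 2 * Real.pi * t * Complex.I) univ := by
    apply Continuous.continuousOn
    have : Continuous (fun t : ℝ => g (t : AddCircle (1 : ℝ))) :=
      hg.comp (AddCircle.continuous_mk' 1)
    fun_prop
  have := exp_one_const isPreconnected_univ hc (fun t _ => by
    rw [Complex.exp_sub, he', div_self (Complex.exp_ne_zero _)]) (mem_univ 0) (mem_univ 1)
  have h1 : ((1 : ℝ) : AddCircle (1 : ℝ)) = ((0 : ℝ) : AddCircle (1 : ℝ)) := by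
    simp
  rw [h1] at this
  have h3 : (2 * (Real.pi : ℂ) * Complex.I) = 0 := by
    simp only [Complex.ofReal_zero, Complex.ofReal_one] at this
    linear_combination this
  exact Complex.two_pi_I_ne_zero h3

end AnnLog

namespace AnnGraph

open SimpleGraph

variable {V : Type*} {G : SimpleGraph V}

/-- total weight of a walk -/
def wsum (w : V → V → ℂ) {a b : V} (p : G.Walk a b) : ℂ :=
  (p.darts.map fun d => w d.fst d.snd).sum

theorem wsum_nil (w : V → V → ℂ) (a : V) : wsum w (Walk.nil : G.Walk a a) = 0 := by
  simp [wsum]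

theorem wsum_cons (w : V → V → ℂ) {a b c : V} (h : G.Adj a b) (p : G.Walk b c) :
    wsum w (Walk.cons h p) = w a b + wsum w p := by
  simp [wsum]

theorem wsum_append (w : V → V → ℂ) {a b c : V} (p : G.Walk a b) (q : G.Walk b c) :
    wsum w (p.append q) = wsum w p + wsum w q := by
  simp [wsum, Walk.darts_append]

theorem wsum_reverse (w : V → V → ℂ) (hw : ∀ a b, G.Adj a b → w b a = - w a b) {a b : V}
    (p : G.Walk a b) : wsum w p.reverse = - wsum w p := by
  induction p with
  | nil => simp [wsum]
  | cons h p ih =>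
    rw [Walk.reverse_cons, wsum_append, ih, wsum_cons, wsum_cons, wsum_nil, hw _ _ h]
    ring

theorem wsum_getVert (w : V → V → ℂ) {a b : V} (p : G.Walk a b) :
    wsum w p = ∑ k ∈ Finset.range p.length, w (p.getVert k) (p.getVert (k + 1)) := by
  induction p with
  | nil => simp [wsum]
  | cons h p ih =>
    rw [wsum_cons, ih, Walk.length_cons, Finset.sum_range_succ']
    rw [add_comm]
    simp

theorem wsum_bypass [DecidableEq V] (w : V → V → ℂ) (hw : ∀ a b, G.Adj a b → w b a = - w a b)
    (hc : ∀ (a : V) (p : G.Walk a a), p.IsCycle → wsum w p = 0) {a b : V} (p : G.Walk a b) :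
    wsum w p.bypass = wsum w p := by
  induction p with
  | nil => rfl
  | @cons u v b h p ih =>
    rw [Walk.bypass]
    split_ifs with hs
    · rw [wsum_cons, ← ih]
      have e := congrArg (wsum w) (Walk.take_spec p.bypass hs)
      rw [wsum_append] at e
      rw [← e, ← add_assoc, right_eq_add]
      show w u v + wsum w (p.bypass.takeUntil u hs) = 0
      have hp : (p.bypass.takeUntil u hs).IsPath := (Walk.bypass_isPath p).takeUntil hs
      generalize p.bypass.takeUntil u hs = r at hp
      by_cases hm : s(u, v) ∈ r.edges
      · cases r with
        | nil => simp at hm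
        | @cons _ x _ h' r' =>
          rw [Walk.cons_isPath_iff] at hp
          rw [Walk.edges_cons, List.mem_cons] at hm
          rcases hm with hm | hm
          · have hx : x = u := by
              rw [Sym2.eq_iff] at hm
              rcases hm with ⟨h1, h2⟩ | ⟨h1, h2⟩
              · exact absurd h1 h.ne
              · exact h1.symm
            subst hx
            have hn : r' = Walk.nil := (Walk.isPath_iff_nil.mp hp.1).eq_nil
            rw [hn, wsum_cons, wsum_nil, hw _ _ h]
            ring
          · exact absurd (Walk.snd_mem_support_of_mem_edges r' hm) hp.2
      · rw [← wsum_cons w h]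
        exact hc _ _ (Walk.cons_isCycle_iff r h |>.mpr ⟨hp, hm⟩)
    · rw [wsum_cons, wsum_cons, ih]

theorem exists_potential (w : V → V → ℂ) (hw : ∀ a b, G.Adj a b → w b a = - w a b)
    (hc : ∀ (a : V) (p : G.Walk a a), p.IsCycle → wsum w p = 0) :
    ∃ P : V → ℂ, ∀ a b, G.Adj a b → w a b = P b - P a := by
  classical
  have hclosed : ∀ (a : V) (p : G.Walk a a), wsum w p = 0 := fun a p => by
    have hn : p.bypass = Walk.nil := (Walk.isPath_iff_nil.mp (Walk.bypass_isPath p)).eq_nil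
    rw [← wsum_bypass w hw hc p, hn, wsum_nil]
  let base : V → V := fun a => (G.connectedComponentMk a).out
  have hb : ∀ a, G.Reachable (base a) a := fun a =>
    ConnectedComponent.exact (Quot.out_eq (G.connectedComponentMk a))
  have hbe : ∀ a b, G.Adj a b → base a = base b := fun a b h => by
    have e : G.connectedComponentMk a = G.connectedComponentMk b :=
      ConnectedComponent.sound h.reachable
    simp only [base, e]
  let pa : ∀ a, G.Walk (base a) a := fun a => (hb a).some
  refine ⟨fun a => wsum w (pa a), fun a b h => ?_⟩
  have h1 := hclosed _ (((pa a).append (Walk.cons h Walk.nil)).append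
    (((pa b).reverse).copy rfl (hbe a b h).symm))
  rw [wsum_append, wsum_append, wsum_cons, wsum_nil] at h1
  have h2 : wsum w (((pa b).reverse).copy rfl (hbe a b h).symm) = - wsum w (pa b) := by
    rw [← wsum_reverse w hw]
    simp [wsum]
  rw [h2] at h1
  linear_combination h1

end AnnGraph

namespace AnnGrid

/-- position of grid vertices: half-integer points -/
def pt (a : ℤ × ℤ) : ℂ := ⟨(a.1 : ℝ) - 1 / 2, (a.2 : ℝ) - 1 / 2⟩

/-- logarithmic weight of an edge -/
def lw (a b : ℤ × ℤ) : ℂ := Complex.log (pt b / pt a)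

/-- unit grid adjacency -/
def Gr (a b : ℤ × ℤ) : Prop :=
  b = (a.1 + 1, a.2) ∨ b = (a.1, a.2 + 1) ∨ a = (b.1 + 1, b.2) ∨ a = (b.1, b.2 + 1)

theorem slit_div {a b : ℂ} (ha : 0 < a.re) (hb : 0 < b.re) : b / a ∈ Complex.slitPlane := by
  have ha0 : a ≠ 0 := by rintro rfl; simp at ha
  by_contra h
  rw [Complex.mem_slitPlane_iff, not_or, not_lt, not_not] at h
  have e : b = b / a * a := by field_simp
  have : b.re = (b / a).re * a.re := by
    conv_lhs => rw [e]
    rw [Complex.mul_re, h.2]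
    ring
  nlinarith [h.1]

theorem slit_div' {a b u : ℂ} (hu : u ≠ 0) (ha : 0 < (u * a).re) (hb : 0 < (u * b).re) :
    b / a ∈ Complex.slitPlane := by
  have := slit_div ha hb
  rwa [mul_div_mul_left _ _ hu] at this

theorem log_div {a b : ℂ} (ha : 0 < a.re) (hb : 0 < b.re) :
    Complex.log (b / a) = Complex.log b - Complex.log a := by
  have ha0 : a ≠ 0 := by rintro rfl; simp at ha
  have hb0 : b ≠ 0 := by rintro rfl; simp at hb
  have h1 : |a.arg| < Real.pi / 2 := Complex.abs_arg_lt_pi_div_two_iff.mpr (Or.inl ha)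
  have h2 : |b.arg| < Real.pi / 2 := Complex.abs_arg_lt_pi_div_two_iff.mpr (Or.inl hb)
  rw [abs_lt] at h1 h2
  have e : b / a = Complex.exp (Complex.log b - Complex.log a) := by
    rw [Complex.exp_sub, Complex.exp_log ha0, Complex.exp_log hb0]
  rw [e, Complex.log_exp]
  · simp only [Complex.sub_im, Complex.log_im]; linarith
  · simp only [Complex.sub_im, Complex.log_im]; linarith

theorem log_div' {a b u : ℂ} (hu : u ≠ 0) (ha : 0 < (u * a).re) (hb : 0 < (u * b).re) :
    Complex.log (b / a) = Complex.log (u * b) - Complex.log (u * a) := by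
  rw [← log_div ha hb, mul_div_mul_left _ _ hu]

theorem int_half_pos {m : ℤ} (h : 1 ≤ m) : (0 : ℝ) < (m : ℝ) - 1 / 2 := by
  have : (1 : ℝ) ≤ m := by exact_mod_cast h
  linarith

theorem int_half_neg {m : ℤ} (h : m ≤ 0) : (m : ℝ) - 1 / 2 < 0 := by
  have : (m : ℝ) ≤ 0 := by exact_mod_cast h
  linarith

/-- two vertices which share a coordinate sign lie in a common half plane -/
theorem half_right {a : ℤ × ℤ} (h : 1 ≤ a.1) : 0 < ((1 : ℂ) * pt a).re := by
  have := int_half_pos h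
  simpa [pt] using this
theorem half_left {a : ℤ × ℤ} (h : a.1 ≤ 0) : 0 < ((-1 : ℂ) * pt a).re := by
  have := int_half_neg h
  simp [pt] at this ⊢; linarith
theorem half_up {a : ℤ × ℤ} (h : 1 ≤ a.2) : 0 < ((-Complex.I : ℂ) * pt a).re := by
  have := int_half_pos h
  simp [pt] at this ⊢; linarith
theorem half_down {a : ℤ × ℤ} (h : a.2 ≤ 0) : 0 < ((Complex.I : ℂ) * pt a).re := by
  have := int_half_neg h
  simp [pt] at this ⊢; linarith

theorem half_vert {a b : ℤ × ℤ} (h : a.1 = b.1) :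
    ∃ u : ℂ, u ≠ 0 ∧ 0 < (u * pt a).re ∧ 0 < (u * pt b).re := by
  rcases le_or_gt a.1 0 with h1 | h1
  · exact ⟨-1, by simp, half_left h1, half_left (h ▸ h1)⟩
  · exact ⟨1, by simp, half_right h1, half_right (h ▸ h1)⟩

theorem half_horiz {a b : ℤ × ℤ} (h : a.2 = b.2) :
    ∃ u : ℂ, u ≠ 0 ∧ 0 < (u * pt a).re ∧ 0 < (u * pt b).re := by
  rcases le_or_gt a.2 0 with h1 | h1
  · exact ⟨Complex.I, by simp, half_down h1, half_down (h ▸ h1)⟩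
  · exact ⟨-Complex.I, by simp, half_up h1, half_up (h ▸ h1)⟩

theorem half_of_gr {a b : ℤ × ℤ} (h : Gr a b) :
    ∃ u : ℂ, u ≠ 0 ∧ 0 < (u * pt a).re ∧ 0 < (u * pt b).re := by
  rcases h with h | h | h | h
  · exact half_horiz (by rw [h])
  · exact half_vert (by rw [h])
  · exact half_horiz (by rw [h])
  · exact half_vert (by rw [h])

theorem lw_antisymm {a b : ℤ × ℤ} (h : Gr a b) : lw b a = - lw a b := by
  obtain ⟨u, hu, h1, h2⟩ := half_of_gr h
  rw [lw, lw, log_div' hu h1 h2, log_div' hu h2 h1]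
  ring

theorem lw_square_of_half (s : ℤ × ℤ) (u : ℂ) (hu : u ≠ 0)
    (h : ∀ a : ℤ × ℤ, s.1 ≤ a.1 → a.1 ≤ s.1 + 1 → s.2 ≤ a.2 → a.2 ≤ s.2 + 1 → 0 < (u * pt a).re) :
    lw s (s.1 + 1, s.2) + lw (s.1 + 1, s.2) (s.1 + 1, s.2 + 1)
      - lw (s.1, s.2 + 1) (s.1 + 1, s.2 + 1) - lw s (s.1, s.2 + 1) = 0 := by
  have h1 := h s (by simp) (by simp) (by simp) (by simp)
  have h2 := h (s.1 + 1, s.2) (by simp) (by simp) (by simp) (by simp)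
  have h3 := h (s.1, s.2 + 1) (by simp) (by simp) (by simp) (by simp)
  have h4 := h (s.1 + 1, s.2 + 1) (by simp) (by simp) (by simp) (by simp)
  simp only [lw]
  rw [log_div' hu h1 h2, log_div' hu h2 h4, log_div' hu h3 h4, log_div' hu h1 h3]
  ring

theorem lw_square (s : ℤ × ℤ) (hs : s ≠ (0, 0)) :
    lw s (s.1 + 1, s.2) + lw (s.1 + 1, s.2) (s.1 + 1, s.2 + 1)
      - lw (s.1, s.2 + 1) (s.1 + 1, s.2 + 1) - lw s (s.1, s.2 + 1) = 0 := by
  have : 1 ≤ s.1 ∨ s.1 ≤ -1 ∨ 1 ≤ s.2 ∨ s.2 ≤ -1 := by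
    by_contra hcon
    push Not at hcon
    apply hs
    ext <;> simp <;> omega
  rcases this with h | h | h | h
  · exact lw_square_of_half s 1 (by simp) fun a h1 h2 h3 h4 => half_right (by omega)
  · exact lw_square_of_half s (-1) (by simp) fun a h1 h2 h3 h4 => half_left (by omega)
  · exact lw_square_of_half s (-Complex.I) (by simp) fun a h1 h2 h3 h4 => half_up (by omega)
  · exact lw_square_of_half s (Complex.I) (by simp) fun a h1 h2 h3 h4 => half_down (by omega)

theorem lw_square_zero :
    lw (0, 0) (1, 0) + lw (1, 0) (1, 1) - lw (0, 1) (1, 1) - lw (0, 0) (0, 1)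
      = 2 * Real.pi * Complex.I := by
  have e1 : pt (1, 0) = Complex.I * pt (0, 0) := by
    apply Complex.ext <;> norm_num [pt]
  have e2 : pt (1, 1) = Complex.I * pt (1, 0) := by
    apply Complex.ext <;> norm_num [pt]
  have e3 : pt (1, 1) = -Complex.I * pt (0, 1) := by
    apply Complex.ext <;> norm_num [pt]
  have e4 : pt (0, 1) = -Complex.I * pt (0, 0) := by
    apply Complex.ext <;> norm_num [pt]
  have n : ∀ a, pt a ≠ 0 := fun a h => by
    obtain ⟨u, -, h1, -⟩ := half_vert (a := a) (b := a) rfl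
    rw [h] at h1
    simp at h1
  simp only [lw]
  have f1 : pt (1, 0) / pt (0, 0) = Complex.I := by rw [e1, mul_div_cancel_right₀ _ (n _)]
  have f2 : pt (1, 1) / pt (1, 0) = Complex.I := by rw [e2, mul_div_cancel_right₀ _ (n _)]
  have f3 : pt (1, 1) / pt (0, 1) = -Complex.I := by rw [e3, mul_div_cancel_right₀ _ (n _)]
  have f4 : pt (0, 1) / pt (0, 0) = -Complex.I := by rw [e4, mul_div_cancel_right₀ _ (n _)]
  rw [f1, f2, f3, f4, Complex.log_I, Complex.log_neg_I]
  ring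

theorem shift_sum (Q : Finset (ℤ × ℤ)) (f : ℤ × ℤ → ℂ) (e : ℤ × ℤ)
    (h : ∀ s, ¬ (s ∈ Q ↔ s - e ∈ Q) → f s = 0) :
    ∑ s ∈ Q, f (s + e) = ∑ s ∈ Q, f s := by
  have hm := Finset.sum_map Q (addRightEmbedding e) f
  simp only [addRightEmbedding_apply] at hm
  rw [← hm]
  apply Finset.sum_congr_of_eq_on_inter
  · intro s hs hn
    apply h
    simp only [Finset.mem_map, addRightEmbedding_apply] at hs
    obtain ⟨t, ht, rfl⟩ := hs
    simp [ht, hn]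
  · intro s hs hn
    apply h
    intro hi
    apply hn
    simp only [Finset.mem_map, addRightEmbedding_apply]
    exact ⟨s - e, hi.mp hs, by simp⟩
  · intros; rfl

/-- directed boundary edges -/
def BE0 (Q : Finset (ℤ × ℤ)) (a b : ℤ × ℤ) : Prop :=
  (b = (a.1 + 1, a.2) ∧ ¬ (a ∈ Q ↔ a - (0, 1) ∈ Q)) ∨
  (b = (a.1, a.2 + 1) ∧ ¬ (a ∈ Q ↔ a - (1, 0) ∈ Q))

/-- boundary graph of the union of squares -/
def BG (Q : Finset (ℤ × ℤ)) : SimpleGraph (ℤ × ℤ) where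
  Adj a b := BE0 Q a b ∨ BE0 Q b a
  symm := ⟨fun _ _ h => h.symm⟩
  loopless := ⟨fun a h => by
    rcases h with (h | h) | (h | h) <;> simp [Prod.ext_iff] at h⟩

theorem BG_gr {Q : Finset (ℤ × ℤ)} {a b : ℤ × ℤ} (h : (BG Q).Adj a b) : Gr a b := by
  rcases h with (h | h) | (h | h)
  · exact Or.inl h.1
  · exact Or.inr (Or.inl h.1)
  · exact Or.inr (Or.inr (Or.inl h.1))
  · exact Or.inr (Or.inr (Or.inr h.1))

theorem exists_cycle (Q : Finset (ℤ × ℤ)) (h0 : (0, 0) ∈ Q) :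
    ∃ (a : ℤ × ℤ) (p : (BG Q).Walk a a), p.IsCycle ∧ AnnGraph.wsum lw p ≠ 0 := by
  by_contra hcon
  push Not at hcon
  obtain ⟨P, hP⟩ := AnnGraph.exists_potential (G := BG Q) lw
    (fun a b h => lw_antisymm (BG_gr h)) hcon
  let H : ℤ × ℤ → ℂ := fun s => lw s (s.1 + 1, s.2) - (P (s.1 + 1, s.2) - P s)
  let K : ℤ × ℤ → ℂ := fun s => lw s (s.1, s.2 + 1) - (P (s.1, s.2 + 1) - P s)
  have hH := shift_sum Q H (0, 1) (fun s hs => by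
    simp only [H]
    rw [hP s _ (Or.inl (Or.inl ⟨rfl, hs⟩)), sub_self])
  have hK := shift_sum Q K (1, 0) (fun s hs => by
    simp only [K]
    rw [hP s _ (Or.inl (Or.inr ⟨rfl, hs⟩)), sub_self])
  have tot : ∑ s ∈ Q, (lw s (s.1 + 1, s.2) + lw (s.1 + 1, s.2) (s.1 + 1, s.2 + 1)
      - lw (s.1, s.2 + 1) (s.1 + 1, s.2 + 1) - lw s (s.1, s.2 + 1)) = 0 := by
    have : ∀ s : ℤ × ℤ, (lw s (s.1 + 1, s.2) + lw (s.1 + 1, s.2) (s.1 + 1, s.2 + 1)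
      - lw (s.1, s.2 + 1) (s.1 + 1, s.2 + 1) - lw s (s.1, s.2 + 1))
      = (H s - H (s + (0, 1))) + (K (s + (1, 0)) - K s) := by
      rintro ⟨i, j⟩
      simp only [H, K, Prod.mk_add_mk, add_zero]
      ring
    clear_value H K
    simp only [this]
    rw [Finset.sum_add_distrib, Finset.sum_sub_distrib, Finset.sum_sub_distrib, hH, hK]
    ring
  rw [Finset.sum_eq_single_of_mem (0, 0) h0 (fun s _ hs => lw_square s hs)] at tot
  simp only [zero_add] at tot
  rw [lw_square_zero] at tot
  exact Complex.two_pi_I_ne_zero tot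

end AnnGrid

namespace AnnPoly

open AnnGrid AnnLog

/-- piecewise linear interpolation of the sequence `A` -/
def poly (A : ℕ → ℂ) : ℕ → ℝ → ℂ
  | 0, _ => A 0
  | m + 1, u => poly A m u + ((max 0 (min 1 (u - m)) : ℝ) : ℂ) * (A (m + 1) - A m)

theorem poly_cont (A : ℕ → ℂ) (m : ℕ) : Continuous (poly A m) := by
  induction m with
  | zero => exact continuous_const
  | succ m ih =>
    simp only [poly]
    have : Continuous fun u : ℝ => ((max 0 (min 1 (u - m)) : ℝ) : ℂ) := by fun_prop
    exact ih.add (this.mul continuous_const)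

theorem poly_ge (A : ℕ → ℂ) (m : ℕ) (u : ℝ) (h : m ≤ u) : poly A m u = A m := by
  induction m with
  | zero => rfl
  | succ m ih =>
    push_cast at h
    rw [poly, ih (by linarith), min_eq_left (by linarith), max_eq_right (by norm_num)]
    push_cast
    ring

theorem poly_mid (A : ℕ → ℂ) (m k : ℕ) (u : ℝ) (hk : k < m) (h1 : k ≤ u) (h2 : u ≤ k + 1) :
    poly A m u = A k + ((u - k : ℝ) : ℂ) * (A (k + 1) - A k) := by
  induction m with
  | zero => omega
  | succ m ih =>
    rw [poly]
    rcases Nat.lt_succ_iff_lt_or_eq.mp hk with h | h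
    · have : (k : ℝ) + 1 ≤ m := by exact_mod_cast h
      rw [ih h, max_eq_left (le_trans (min_le_right _ _) (by linarith))]
      simp
    · subst h
      rw [poly_ge A k u h1, min_eq_right (by linarith), max_eq_right (by linarith)]

theorem int_cases {m : ℤ} {r : ℝ} (h : (m : ℝ) = r) (h1 : -2 < r) (h2 : r < 2) :
    m = -1 ∨ m = 0 ∨ m = 1 := by
  rw [← h] at h1 h2
  have h3 : -2 < m := by exact_mod_cast h1
  have h4 : m < 2 := by exact_mod_cast h2
  omega

/-- direction vectors of grid edges -/
theorem gr_dir {a b : ℤ × ℤ} (h : Gr a b) : ∃ x y : ℤ, b = (a.1 + x, a.2 + y) ∧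
    ((x = 1 ∧ y = 0) ∨ (x = 0 ∧ y = 1) ∨ (x = -1 ∧ y = 0) ∨ (x = 0 ∧ y = -1)) := by
  rcases h with h | h | h | h
  · exact ⟨1, 0, by simp [h], by simp⟩
  · exact ⟨0, 1, by simp [h], by simp⟩
  · exact ⟨-1, 0, by simp [h], by simp⟩
  · exact ⟨0, -1, by simp [h], by simp⟩

theorem edge_inter {a b c d : ℤ × ℤ} (hab : Gr a b) (hcd : Gr c d) {s t : ℝ} (hs0 : 0 ≤ s)
    (hs1 : s < 1) (ht0 : 0 ≤ t) (ht1 : t < 1)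
    (h : pt a + (s : ℂ) * (pt b - pt a) = pt c + (t : ℂ) * (pt d - pt c)) :
    (a = c ∧ s = t) ∨ (a = d ∧ b = c) := by
  obtain ⟨x, y, rfl, hxy⟩ := gr_dir hab
  obtain ⟨x', y', rfl, hxy'⟩ := gr_dir hcd
  obtain ⟨a1, a2⟩ := a
  obtain ⟨c1, c2⟩ := c
  have hr := congrArg Complex.re h
  have hi := congrArg Complex.im h
  simp [pt] at hr hi
  have e1 : ((c1 - a1 : ℤ) : ℝ) = s * x - t * x' := by push_cast; linarith
  have e2 : ((c2 - a2 : ℤ) : ℝ) = s * y - t * y' := by push_cast; linarith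
  have b1 : c1 - a1 = -1 ∨ c1 - a1 = 0 ∨ c1 - a1 = 1 := by
    apply int_cases e1 <;>
    rcases hxy with ⟨rfl, rfl⟩ | ⟨rfl, rfl⟩ | ⟨rfl, rfl⟩ | ⟨rfl, rfl⟩ <;>
    rcases hxy' with ⟨rfl, rfl⟩ | ⟨rfl, rfl⟩ | ⟨rfl, rfl⟩ | ⟨rfl, rfl⟩ <;>
    push_cast <;> linarith
  have b2 : c2 - a2 = -1 ∨ c2 - a2 = 0 ∨ c2 - a2 = 1 := by
    apply int_cases e2 <;>
    rcases hxy with ⟨rfl, rfl⟩ | ⟨rfl, rfl⟩ | ⟨rfl, rfl⟩ | ⟨rfl, rfl⟩ <;>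
    rcases hxy' with ⟨rfl, rfl⟩ | ⟨rfl, rfl⟩ | ⟨rfl, rfl⟩ | ⟨rfl, rfl⟩ <;>
    push_cast <;> linarith
  simp only [Prod.mk.injEq]
  clear h hr hi hab hcd
  generalize hm1 : c1 - a1 = m1 at *
  generalize hm2 : c2 - a2 = m2 at *
  rcases b1 with rfl | rfl | rfl <;> rcases b2 with rfl | rfl | rfl <;>
    rcases hxy with ⟨rfl, rfl⟩ | ⟨rfl, rfl⟩ | ⟨rfl, rfl⟩ | ⟨rfl, rfl⟩ <;>
    rcases hxy' with ⟨rfl, rfl⟩ | ⟨rfl, rfl⟩ | ⟨rfl, rfl⟩ | ⟨rfl, rfl⟩ <;>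
    push_cast at e1 e2 <;>
    first
    | (exfalso; linarith)
    | (left; exact ⟨⟨by omega, by omega⟩, by linarith⟩)
    | (right; exact ⟨⟨by omega, by omega⟩, ⟨by omega, by omega⟩⟩)

theorem seg_log {A B : ℂ} {u : ℂ} (hu : u ≠ 0) (hA : 0 < (u * A).re) (hB : 0 < (u * B).re)
    {g : ℝ → ℂ} {k : ℝ} (hg : ContinuousOn g (Icc k (k + 1)))
    (he : ∀ s ∈ Icc k (k + 1), Complex.exp (g s) = A + ((s - k : ℝ) : ℂ) * (B - A)) :
    g (k + 1) - g k = Complex.log (B / A) := by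
  have hA0 : A ≠ 0 := by rintro rfl; simp at hA
  let P : ℝ → ℂ := fun s => A + ((s - k : ℝ) : ℂ) * (B - A)
  have hP : Continuous P := by fun_prop
  have hre : ∀ s ∈ Icc k (k + 1), 0 < (u * P s).re := by
    rintro s ⟨h1, h2⟩
    have : u * P s = ((1 - (s - k) : ℝ) : ℂ) * (u * A) + ((s - k : ℝ) : ℂ) * (u * B) := by
      simp only [P]; push_cast; ring
    rw [this, Complex.add_re, Complex.re_ofReal_mul, Complex.re_ofReal_mul]
    rcases eq_or_lt_of_le h1 with h | h
    · rw [← h]; simpa using hA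
    · have h3 := mul_pos (sub_pos.mpr h) hB
      have h4 : 0 ≤ (1 - (s - k)) * (u * A).re := mul_nonneg (by linarith) hA.le
      linarith
  have hsl : ∀ s ∈ Icc k (k + 1), P s / A ∈ Complex.slitPlane :=
    fun s hs => slit_div' hu hA (hre s hs)
  have hc : ContinuousOn (fun s => g s - g k - Complex.log (P s / A)) (Icc k (k + 1)) :=
    (hg.sub continuousOn_const).sub
      (ContinuousOn.clog (hP.continuousOn.div_const A) hsl)
  have kk : k ∈ Icc k (k + 1) := ⟨le_refl _, by linarith⟩
  have kk1 : k + 1 ∈ Icc k (k + 1) := ⟨by linarith, le_refl _⟩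
  have hk : Complex.exp (g k) = A := by rw [he k kk]; simp
  have := exp_one_const isPreconnected_Icc hc (fun s hs => by
    rw [Complex.exp_sub, Complex.exp_sub, Complex.exp_log (Complex.slitPlane_ne_zero (hsl s hs)),
      he s hs, hk]
    exact div_self (Complex.slitPlane_ne_zero (hsl s hs))) kk kk1
  have p0 : P k = A := by simp [P]
  have p1 : P (k + 1) = B := by simp [P]
  rw [p0, p1, div_self hA0, Complex.log_one] at this
  linear_combination -this

theorem exists_polygon (n : ℕ) (hn : 3 ≤ n) (v : ℕ → ℤ × ℤ) (hv : v n = v 0)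
    (hinj : ∀ i j, i < n → j < n → v i = v j → i = j)
    (hg : ∀ k < n, Gr (v k) (v (k + 1)))
    (hs : ∑ k ∈ Finset.range n, lw (v k) (v (k + 1)) ≠ 0) :
    ∃ φ : AddCircle (1 : ℝ) → ℂ, Continuous φ ∧ Function.Injective φ ∧ ¬ HasLog φ ∧
      ∀ x, ∃ k < n, ∃ s : ℝ, 0 ≤ s ∧ s < 1 ∧
        φ x = pt (v k) + (s : ℂ) * (pt (v (k + 1)) - pt (v k)) := by
  let A : ℕ → ℂ := fun k => pt (v k)
  have hn0 : (0 : ℝ) < n := by exact_mod_cast (by omega : 0 < n)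
  let f : ℝ → ℂ := fun t => poly A n (n * t)
  have hf : Continuous f := (poly_cont A n).comp (by fun_prop)
  have hf0 : f 0 = A 0 := by
    simp only [f, mul_zero]
    rw [poly_mid A n 0 0 (by omega) (by simp) (by simp)]
    simp
  have hf1 : f 1 = A 0 := by
    simp only [f, mul_one]
    rw [poly_ge A n n le_rfl]
    simp only [A, hv]
  let φ : AddCircle (1 : ℝ) → ℂ := AddCircle.liftIco 1 0 f
  have hφc : Continuous φ :=
    AddCircle.liftIco_continuous (by rw [zero_add, hf0, hf1]) hf.continuousOn
  have hφ : ∀ t ∈ Ico (0 : ℝ) 1, φ (t : AddCircle (1 : ℝ)) = f t := fun t ht =>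
    AddCircle.liftIco_zero_coe_apply ht
  have hφ' : ∀ t ∈ Icc (0 : ℝ) 1, φ (t : AddCircle (1 : ℝ)) = f t := fun t ht => by
    rcases eq_or_lt_of_le ht.2 with h | h
    · have h1 : ((1 : ℝ) : AddCircle (1 : ℝ)) = ((0 : ℝ) : AddCircle (1 : ℝ)) := by simp
      rw [h, h1, hφ 0 (by simp), hf0, hf1]
    · exact hφ t ⟨ht.1, h⟩
  have hdec : ∀ t ∈ Ico (0 : ℝ) 1, ∃ k < n, ∃ s : ℝ, 0 ≤ s ∧ s < 1 ∧ n * t = k + s ∧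
      f t = pt (v k) + (s : ℂ) * (pt (v (k + 1)) - pt (v k)) := by
    intro t ht
    have h0 : 0 ≤ n * t := mul_nonneg hn0.le ht.1
    have h1 : n * t < n := by nlinarith [ht.2]
    have h2 := Nat.floor_le h0
    have h3 := Nat.lt_floor_add_one (n * t)
    have h4 : ⌊n * t⌋₊ < n := (Nat.floor_lt h0).mpr h1
    refine ⟨⌊n * t⌋₊, h4, n * t - ⌊n * t⌋₊, by linarith, by linarith, by ring, ?_⟩
    exact poly_mid A n _ _ h4 h2 h3.le
  refine ⟨φ, hφc, ?_, ?_, ?_⟩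
  · intro x y hxy
    obtain ⟨t, ht, rfl⟩ := AddCircle.eq_coe_Ico x
    obtain ⟨t', ht', rfl⟩ := AddCircle.eq_coe_Ico y
    rw [hφ t ht, hφ t' ht'] at hxy
    obtain ⟨k, hk, s, hs0, hs1, e1, e2⟩ := hdec t ht
    obtain ⟨k', hk', s', hs0', hs1', e1', e2'⟩ := hdec t' ht'
    rw [e2, e2'] at hxy
    rcases edge_inter (hg k hk) (hg k' hk') hs0 hs1 hs0' hs1' hxy with ⟨h1, h2⟩ | ⟨h1, h2⟩
    · have := hinj k k' hk hk' h1
      subst this h2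
      rw [← e1'] at e1
      rw [mul_left_cancel₀ hn0.ne' e1]
    · exfalso
      rcases Nat.lt_or_eq_of_le (Nat.succ_le_of_lt hk') with h3 | h3
      · have e := hinj k (k' + 1) hk h3 h1
        rcases Nat.lt_or_eq_of_le (Nat.succ_le_of_lt hk) with h4 | h4
        · have := hinj (k + 1) k' h4 hk' h2
          omega
        · rw [show k + 1 = n from h4, hv] at h2
          have := hinj 0 k' (by omega) hk' h2
          omega
      · rw [show k' + 1 = n from h3, hv] at h1
        have := hinj k 0 hk (by omega) h1
        subst this
        have := hinj 1 k' (by omega) hk' h2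
        omega
  · rintro ⟨g, hgc, hge⟩
    apply hs
    let G : ℝ → ℂ := fun u => g ((u / n : ℝ) : AddCircle (1 : ℝ))
    have hG : Continuous G := hgc.comp ((AddCircle.continuous_mk' 1).comp (by fun_prop))
    have step : ∀ k ∈ Finset.range n, lw (v k) (v (k + 1)) = G ((k + 1 : ℕ) : ℝ) - G (k : ℝ) := by
      intro k hk
      rw [Finset.mem_range] at hk
      have hk1 : (k : ℝ) + 1 ≤ n := by exact_mod_cast hk
      have hk0 : (0 : ℝ) ≤ k := by positivity
      obtain ⟨u, hu, h1, h2⟩ := half_of_gr (hg k hk)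
      rw [Nat.cast_add_one, seg_log hu h1 h2 hG.continuousOn]
      · rfl
      · rintro s ⟨hs1, hs2⟩
        simp only [G]
        rw [hge, hφ' (s / n) ⟨div_nonneg (by linarith) hn0.le, (div_le_one hn0).mpr (by linarith)⟩]
        simp only [f]
        rw [mul_div_cancel₀ _ hn0.ne']
        exact poly_mid A n k s hk hs1 hs2
    rw [Finset.sum_congr rfl step, Finset.sum_range_sub (fun k : ℕ => G (k : ℝ))]
    have h1 : ((1 : ℝ) : AddCircle (1 : ℝ)) = ((0 : ℝ) : AddCircle (1 : ℝ)) := by simp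
    simp only [G]
    rw [div_self hn0.ne', h1]
    simp
  · intro x
    obtain ⟨t, ht, rfl⟩ := AddCircle.eq_coe_Ico x
    obtain ⟨k, hk, s, hs0, hs1, e1, e2⟩ := hdec t ht
    exact ⟨k, hk, s, hs0, hs1, by rw [hφ t ht, e2]⟩

end AnnPoly

namespace AnnSep

open AnnGrid AnnLog AnnPoly

/-- closed grid square of side `δ` centred at `δ s` -/
def sq (δ : ℝ) (s : ℤ × ℤ) : Set ℂ := {z | |z.re - δ * s.1| ≤ δ / 2 ∧ |z.im - δ * s.2| ≤ δ / 2}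

theorem sq_close {δ : ℝ} {s : ℤ × ℤ} {z w : ℂ} (hz : z ∈ sq δ s) (hw : w ∈ sq δ s) :
    dist z w ≤ 2 * δ := by
  rw [Complex.dist_eq]
  refine (Complex.norm_le_abs_re_add_abs_im _).trans ?_
  obtain ⟨h1, h2⟩ := hz
  obtain ⟨h3, h4⟩ := hw
  rw [abs_le] at h1 h2 h3 h4
  have h5 : |(z - w).re| ≤ δ := by rw [abs_le, Complex.sub_re]; constructor <;> linarith
  have h6 : |(z - w).im| ≤ δ := by rw [abs_le, Complex.sub_im]; constructor <;> linarith
  linarith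

theorem sq_fin {δ : ℝ} (hδ : 0 < δ) {K : Set ℂ} (hK : IsCompact K) :
    {s : ℤ × ℤ | (sq δ s ∩ K).Nonempty}.Finite := by
  obtain ⟨R, hR⟩ := hK.isBounded.exists_norm_le
  obtain ⟨N, hN⟩ := exists_nat_gt ((R + δ) / δ)
  rw [div_lt_iff₀ hδ] at hN
  apply ((Set.finite_Icc (-(N : ℤ)) N).prod (Set.finite_Icc (-(N : ℤ)) N)).subset
  rintro ⟨i, j⟩ ⟨z, ⟨h1, h2⟩, hz⟩
  have h3 := (Complex.abs_re_le_norm z).trans (hR z hz)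
  have h4 := (Complex.abs_im_le_norm z).trans (hR z hz)
  have key : ∀ (m : ℤ) (r : ℝ), |r - δ * m| ≤ δ / 2 → |r| ≤ R → m ∈ Icc (-(N : ℤ)) N := by
    intro m r h h'
    rw [abs_le] at h h'
    have a1 : (m : ℝ) < N := by
      by_contra hc
      push Not at hc
      nlinarith
    have a2 : (-(N : ℝ)) < m := by
      by_contra hc
      push Not at hc
      nlinarith
    constructor
    · exact_mod_cast a2.le
    · exact_mod_cast a1.le
  exact ⟨key i _ h1 h3, key j _ h2 h4⟩

theorem sq_horiz {δ : ℝ} (hδ : 0 < δ) {a : ℤ × ℤ} {s : ℝ} (h0 : 0 ≤ s) (h1 : s ≤ 1) :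
    (δ : ℂ) * (pt a + (s : ℂ) * (pt (a.1 + 1, a.2) - pt a)) ∈ sq δ a ∧
    (δ : ℂ) * (pt a + (s : ℂ) * (pt (a.1 + 1, a.2) - pt a)) ∈ sq δ (a - (0, 1)) := by
  simp [sq, pt, abs_le]
  refine ⟨⟨⟨?_, ?_⟩, ?_, ?_⟩, ⟨?_, ?_⟩, ?_, ?_⟩ <;> nlinarith

theorem sq_vert {δ : ℝ} (hδ : 0 < δ) {a : ℤ × ℤ} {s : ℝ} (h0 : 0 ≤ s) (h1 : s ≤ 1) :
    (δ : ℂ) * (pt a + (s : ℂ) * (pt (a.1, a.2 + 1) - pt a)) ∈ sq δ a ∧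
    (δ : ℂ) * (pt a + (s : ℂ) * (pt (a.1, a.2 + 1) - pt a)) ∈ sq δ (a - (1, 0)) := by
  simp [sq, pt, abs_le]
  refine ⟨⟨⟨?_, ?_⟩, ?_, ?_⟩, ⟨?_, ?_⟩, ?_, ?_⟩ <;> nlinarith

theorem exists_sep {K V : Set ℂ} (hK : IsCompact K) (hV : IsOpen V) (hKV : K ⊆ V)
    (h0 : (0 : ℂ) ∈ K) :
    ∃ φ : AddCircle (1 : ℝ) → ℂ, Continuous φ ∧ Function.Injective φ ∧ ¬ HasLog φ ∧
      ∀ x, φ x ∈ V ∧ φ x ∉ K := by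
  obtain ⟨ε, hε, hεV⟩ := hK.exists_cthickening_subset_open hV hKV
  obtain ⟨δ, hδ, hδε⟩ : ∃ δ : ℝ, 0 < δ ∧ 2 * δ = ε := ⟨ε / 2, by positivity, by ring⟩
  let Q := (sq_fin hδ hK).toFinset
  have hQ : ∀ s, s ∈ Q ↔ (sq δ s ∩ K).Nonempty := fun s => by simp [Q]
  have h0Q : (0, 0) ∈ Q := (hQ _).mpr ⟨0, by simp [sq]; positivity, h0⟩
  have good : ∀ {z : ℂ} {s t : ℤ × ℤ}, z ∈ sq δ s → z ∈ sq δ t → ¬ (s ∈ Q ↔ t ∈ Q) →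
      z ∈ V ∧ z ∉ K := by
    have aux : ∀ {z : ℂ} {s t : ℤ × ℤ}, z ∈ sq δ s → z ∈ sq δ t → s ∈ Q → t ∉ Q →
      z ∈ V ∧ z ∉ K := by
      intro z s t hs ht hsQ htQ
      constructor
      · obtain ⟨w, hw, hwK⟩ := (hQ s).mp hsQ
        apply hεV
        exact Metric.mem_cthickening_of_dist_le z w ε K hwK (hδε ▸ sq_close hs hw)
      · exact fun hz => htQ ((hQ t).mpr ⟨z, ht, hz⟩)
    intro z s t hs ht h
    by_cases h1 : s ∈ Q <;> by_cases h2 : t ∈ Q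
    · exact absurd (iff_of_true h1 h2) h
    · exact aux hs ht h1 h2
    · exact aux ht hs h2 h1
    · exact absurd (iff_of_false h1 h2) h
  have edge0 : ∀ {a b : ℤ × ℤ} {s : ℝ}, BE0 Q a b → 0 ≤ s → s ≤ 1 →
      (δ : ℂ) * (pt a + (s : ℂ) * (pt b - pt a)) ∈ V ∧
      (δ : ℂ) * (pt a + (s : ℂ) * (pt b - pt a)) ∉ K := by
    rintro a b s (⟨rfl, h⟩ | ⟨rfl, h⟩) hs0 hs1
    · exact good (sq_horiz hδ hs0 hs1).1 (sq_horiz hδ hs0 hs1).2 h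
    · exact good (sq_vert hδ hs0 hs1).1 (sq_vert hδ hs0 hs1).2 h
  have edge : ∀ {a b : ℤ × ℤ} {s : ℝ}, (BG Q).Adj a b → 0 ≤ s → s ≤ 1 →
      (δ : ℂ) * (pt a + (s : ℂ) * (pt b - pt a)) ∈ V ∧
      (δ : ℂ) * (pt a + (s : ℂ) * (pt b - pt a)) ∉ K := by
    intro a b s h hs0 hs1
    rcases h with h | h
    · exact edge0 h hs0 hs1
    · have := edge0 (s := 1 - s) h (by linarith) (by linarith)
      have e : pt b + ((1 - s : ℝ) : ℂ) * (pt a - pt b) = pt a + (s : ℂ) * (pt b - pt a) := by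
        push_cast; ring
      rwa [e] at this
  obtain ⟨a, p, hp, hw⟩ := exists_cycle Q h0Q
  rw [AnnGraph.wsum_getVert] at hw
  obtain ⟨φ, hc, hi, hl, hx⟩ := exists_polygon p.length hp.three_le_length p.getVert
    (by simp) (fun i j hi hj h => by
      have := hp.getVert_injOn' (x₁ := i) (x₂ := j) (by simp; omega) (by simp; omega) h
      exact this)
    (fun k hk => BG_gr (p.adj_getVert_succ hk)) hw
  have hδ0 : (δ : ℂ) ≠ 0 := by exact_mod_cast hδ.ne'
  refine ⟨fun x => (δ : ℂ) * φ x, by fun_prop, fun x y h => hi (mul_left_cancel₀ hδ0 h), ?_, ?_⟩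
  · intro h
    apply hl
    have := hasLog_mul (hasLog_const (X := AddCircle (1 : ℝ)) (inv_ne_zero hδ0)) h
    convert this using 2 with x
    field_simp
  · intro x
    obtain ⟨k, hk, s, hs0, hs1, e⟩ := hx x
    simp only [e]
    exact edge (p.adj_getVert_succ hk) hs0 hs1.le

/-- from an attracted neighbourhood for the iterate to a curve disjoint from its image -/
theorem planar (F : ℂ ≃ₜ ℂ) (hF : F 0 = 0) (U : Set ℂ) (hb : Bornology.IsBounded U)
    (hU : IsOpen U) (h0 : (0 : ℂ) ∈ U) (q : ℕ) (hq : 0 < q)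
    (h : ∀ z ∈ closure U, F^[q] z ∈ U) :
    ∃ φ : AddCircle (1 : ℝ) → ℂ, Continuous φ ∧ Function.Injective φ ∧ ¬ HasLog φ ∧
      (∀ x, φ x ≠ 0) ∧ ∀ x y, φ x ≠ F (φ y) := by
  have hFi : ∀ i, Continuous (F^[i]) := fun i => F.continuous.iterate i
  have hF0 : ∀ i, F^[i] 0 = 0 := fun i => Function.iterate_fixed hF i
  let K := F^[q] '' closure U
  have hKc : IsCompact K := hb.isCompact_closure.image (hFi q)
  have hKU : K ⊆ U := by rintro _ ⟨z, hz, rfl⟩; exact h z hz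
  obtain ⟨r, hr, hrU⟩ := hKc.exists_cthickening_subset_open hU hKU
  have hq' : (0 : ℝ) < q := by exact_mod_cast hq
  let ρ : ℕ → ℝ := fun i => r * ((i + 1 : ℝ) / q)
  have hρ : ∀ i, 0 < ρ i := fun i => by simp only [ρ]; positivity
  let A : ℕ → Set ℂ := fun i => Metric.thickening (ρ i) K
  have hAU : ∀ i < q, A i ⊆ U := fun i hi => by
    refine (Metric.thickening_subset_cthickening_of_le ?_ K).trans hrU
    have : ((i + 1 : ℝ) / q) ≤ 1 := by
      rw [div_le_one hq']; exact_mod_cast hi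
    simp only [ρ]; nlinarith
  have hAs : ∀ i, closure (A i) ⊆ A (i + 1) := fun i => by
    refine (Metric.closure_thickening_subset_cthickening _ _).trans
      (Metric.cthickening_subset_thickening' (hρ (i + 1)) ?_ K)
    simp only [ρ]
    push_cast
    gcongr
    linarith
  have hKA : ∀ i, K ⊆ A i := fun i => Metric.self_subset_thickening (hρ i) K
  let V : Set ℂ := ⋃ i ∈ Finset.range q, F^[i] '' A i
  have himg : ∀ i, ∀ S : Set ℂ, IsOpen S → IsOpen (F^[i] '' S) := by
    intro i
    induction i with
    | zero => intro S hS; simpa using hS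
    | succ i ih =>
      intro S hS
      rw [Function.iterate_succ, Set.image_comp]
      exact ih _ (F.isOpenMap S hS)
  have hVo : IsOpen V := isOpen_biUnion fun i _ => himg i _ Metric.isOpen_thickening
  let W : Set ℂ := ⋃ i ∈ Finset.range q, F^[i] '' closure (A i)
  have hWc : IsCompact W := (Finset.range q).isCompact_biUnion fun i hi =>
    ((hb.subset (hAU i (Finset.mem_range.mp hi))).isCompact_closure).image (hFi i)
  have hVW : V ⊆ W := iUnion₂_mono fun i _ => image_mono subset_closure
  have hFW : F '' W ⊆ V := by
    rintro _ ⟨z, hz, rfl⟩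
    simp only [W, mem_iUnion, Finset.mem_range] at hz
    obtain ⟨i, hi, y, hy, rfl⟩ := hz
    rw [← Function.iterate_succ_apply' (⇑F)]
    simp only [V, mem_iUnion, Finset.mem_range]
    by_cases hlast : i + 1 < q
    · exact ⟨i + 1, hlast, y, hAs i hy, rfl⟩
    · have e : i + 1 = q := by omega
      refine ⟨0, hq, F^[q] y, hKA 0 ⟨y, closure_mono (hAU i hi) hy, rfl⟩, ?_⟩
      rw [Nat.succ_eq_add_one, e]
      rfl
  have h0V : (0 : ℂ) ∈ V := by
    simp only [V, mem_iUnion, Finset.mem_range]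
    exact ⟨0, hq, 0, hKA 0 ⟨0, subset_closure h0, hF0 q⟩, rfl⟩
  have h0K : (0 : ℂ) ∈ F '' W := ⟨0, hVW h0V, hF⟩
  obtain ⟨φ, hc, hi, hl, hx⟩ := exists_sep (hWc.image F.continuous) hVo hFW h0K
  refine ⟨φ, hc, hi, hl, fun x hx0 => (hx x).2 (hx0 ▸ h0K), fun x y e => ?_⟩
  exact (hx x).2 (e ▸ ⟨φ y, hVW (hx y).1, rfl⟩)

end AnnSep

namespace AnnTop

open AnnLog

theorem sep_step {κ : AddCircle (1 : ℝ) → ℂ} (hκ : Continuous κ) (hκ0 : ∀ x, κ x ≠ 0)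
    (hl : ¬ HasLog κ) (G : ℂ ≃ₜ ℂ) (hG : G 0 = 0) (hd : ∀ x y, κ x ≠ G (κ y)) :
    ∃ U : Set ℂ, Bornology.IsBounded U ∧ IsOpen U ∧ (0 : ℂ) ∈ U ∧
      ((∀ z ∈ closure U, G z ∈ U) ∨ (∀ z ∈ closure U, G.symm z ∈ U)) := by
  let c : Set ℂ := range κ
  have hc : IsCompact c := isCompact_range hκ
  have hcc : IsPreconnected c := isPreconnected_range hκ
  let U := connectedComponentIn cᶜ 0
  have h0c : (0 : ℂ) ∈ cᶜ := by rintro ⟨x, hx⟩; exact hκ0 x hx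
  have hUo : IsOpen U := hc.isClosed.isOpen_compl.connectedComponentIn
  have h0U : (0 : ℂ) ∈ U := mem_connectedComponentIn h0c
  have hUc : U ⊆ cᶜ := connectedComponentIn_subset _ _
  have hUp : IsPreconnected U := isPreconnected_connectedComponentIn
  obtain ⟨R, hR⟩ := hc.isBounded.exists_norm_le
  have hUb : Bornology.IsBounded U := by
    rw [isBounded_iff_forall_norm_le]
    refine ⟨max R 1, fun p hp => ?_⟩
    by_contra hcon
    push Not at hcon
    rw [max_lt_iff] at hcon
    apply hl
    have h1 : HasLog fun x => κ x - p := hasLog_far hκ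
      (fun x => lt_of_le_of_lt (hR _ ⟨x, rfl⟩) hcon.1) (by rintro rfl; simp at hcon; linarith)
    have := hasLog_base hκ hUp (fun x hx => hUc hx ⟨x, rfl⟩) hp h0U h1
    simpa using this
  -- general facts on components of the complement of a closed set
  have gen : ∀ d : Set ℂ, IsClosed d → (0 : ℂ) ∈ dᶜ →
      closure (connectedComponentIn dᶜ 0) ⊆ connectedComponentIn dᶜ 0 ∪ d := by
    intro d hd h0 z hz
    by_cases hzd : z ∈ d
    · exact Or.inr hzd
    · left
      have hn : connectedComponentIn dᶜ z ∈ 𝓝 z :=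
        hd.isOpen_compl.connectedComponentIn.mem_nhds (mem_connectedComponentIn hzd)
      obtain ⟨w, hw1, hw2⟩ := mem_closure_iff_nhds.mp hz _ hn
      rw [connectedComponentIn_eq hw2, ← connectedComponentIn_eq hw1]
      exact mem_connectedComponentIn hzd
  have gen2 : ∀ d e : Set ℂ, IsClosed d → (0 : ℂ) ∈ dᶜ → (0 : ℂ) ∈ eᶜ → Disjoint d e →
      Disjoint e (connectedComponentIn dᶜ 0) →
      closure (connectedComponentIn dᶜ 0) ⊆ connectedComponentIn eᶜ 0 := by
    intro d e hd h0d h0e hde hdis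
    apply isPreconnected_connectedComponentIn.closure.subset_connectedComponentIn
      (subset_closure (mem_connectedComponentIn h0d))
    intro z hz hze
    rcases gen d hd h0d hz with h | h
    · exact disjoint_left.mp hdis hze h
    · exact disjoint_left.mp hde h hze
  let c' := G '' c
  have hc' : IsCompact c' := hc.image G.continuous
  have hcc' : IsPreconnected c' := hcc.image _ G.continuous.continuousOn
  have h0c' : (0 : ℂ) ∈ c'ᶜ := by
    rintro ⟨z, hz, h⟩
    rw [← hG] at h
    exact h0c (G.injective h ▸ hz)
  have hU' : G '' U = connectedComponentIn c'ᶜ 0 := by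
    rw [G.image_connectedComponentIn h0c, hG, image_compl_eq G.bijective]
  have hdisj : Disjoint c c' := by
    rw [disjoint_left]
    rintro _ ⟨x, rfl⟩ ⟨_, ⟨y, rfl⟩, h⟩
    exact hd x y h.symm
  refine ⟨U, hUb, hUo, h0U, ?_⟩
  by_cases hA : Disjoint c' U
  · right
    have := gen2 c c' hc.isClosed h0c h0c' hdisj hA
    rw [← hU'] at this
    intro z hz
    obtain ⟨w, hw, rfl⟩ := this hz
    simpa using hw
  by_cases hB : Disjoint c (connectedComponentIn c'ᶜ 0)
  · left
    have := gen2 c' c hc'.isClosed h0c' h0c hdisj.symm hB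
    rw [← hU', ← G.image_closure] at this
    exact fun z hz => this ⟨z, hz, rfl⟩
  exfalso
  have sub : ∀ d e : Set ℂ, IsPreconnected e → Disjoint d e →
      ¬ Disjoint e (connectedComponentIn dᶜ 0) → e ⊆ connectedComponentIn dᶜ 0 := by
    intro d e he hde hn
    rw [not_disjoint_iff] at hn
    obtain ⟨z, hz1, hz2⟩ := hn
    rw [connectedComponentIn_eq hz2]
    exact he.subset_connectedComponentIn hz1 fun w hw hwd => disjoint_left.mp hde hwd hw
  have s1 : c' ⊆ U := sub c c' hcc' hdisj hA
  have s2 : c ⊆ connectedComponentIn c'ᶜ 0 := sub c' c hcc hdisj.symm hB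
  let W := U ∪ connectedComponentIn c'ᶜ 0
  have hWo : IsOpen W := hUo.union hc'.isClosed.isOpen_compl.connectedComponentIn
  have hWc : IsClosed W := by
    apply isClosed_of_closure_subset
    rw [closure_union]
    apply union_subset
    · exact (gen c hc.isClosed h0c).trans
        (union_subset subset_union_left (s2.trans subset_union_right))
    · exact (gen c' hc'.isClosed h0c').trans
        (union_subset subset_union_right (s1.trans subset_union_left))
  have hWu : W = univ := IsClopen.eq_univ ⟨hWc, hWo⟩ ⟨0, Or.inl h0U⟩
  have hWb : Bornology.IsBounded W := by
    refine hUb.union ?_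
    rw [← hU']
    exact (hUb.isCompact_closure.image G.continuous).isBounded.subset (image_mono subset_closure)
  rw [hWu] at hWb
  exact NormedSpace.unbounded_univ ℝ ℂ hWb

/-- the punctured plane -/
abbrev Cs := {z : ℂ // z ≠ 0}

/-- extension by zero at the origin -/
def ext0 (g : Cs → Cs) (z : ℂ) : ℂ := by
  classical exact if h : z ≠ 0 then (g ⟨z, h⟩ : ℂ) else 0

theorem ext0_ne (g : Cs → Cs) (z : Cs) : ext0 g z = g z := by
  simp [ext0, z.2]

theorem ext0_zero (g : Cs → Cs) : ext0 g 0 = 0 := by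
  simp [ext0]

theorem ext0_contAt (g : Cs → Cs) (hg : Continuous g) (z : ℂ) (hz : z ≠ 0) :
    ContinuousAt (ext0 g) z := by
  have ho : IsOpen {z : ℂ | z ≠ 0} := isOpen_ne
  have : ContinuousOn (ext0 g) {z : ℂ | z ≠ 0} := by
    rw [continuousOn_iff_continuous_domRestrict]
    have e : ({z : ℂ | z ≠ 0}).domRestrict (ext0 g) = fun z : Cs => (g z : ℂ) := by
      ext z
      exact ext0_ne g z
    rw [e]
    exact continuous_subtype_val.comp hg
  exact this.continuousAt (ho.mem_nhds hz)

theorem ext0_cont (g : Cs ≃ₜ Cs) (δ R : ℝ) (hδ : 0 < δ)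
    (h : ∀ z : Cs, ‖(z : ℂ)‖ < δ → ‖(g z : ℂ)‖ ≤ R) : Continuous (ext0 g) := by
  rw [continuous_iff_continuousAt]
  intro z
  by_cases hz : z = 0
  · subst hz
    rw [Metric.continuousAt_iff]
    intro ε hε
    let S : Set ℂ := Metric.closedBall 0 R \ Metric.ball 0 ε
    have hS : IsCompact S := (isCompact_closedBall 0 R).diff Metric.isOpen_ball
    have hS0 : ∀ w ∈ S, w ≠ 0 := by
      rintro w hw rfl
      exact hw.2 (Metric.mem_ball_self hε)
    obtain ⟨m, hm, hmS⟩ := hS.exists_forall_le' (f := fun w => ‖ext0 g.symm w‖) (a := 0)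
      (fun w hw => (ext0_contAt g.symm g.symm.continuous w (hS0 w hw)).norm.continuousWithinAt)
      (fun w hw => by
        have := ext0_ne g.symm ⟨w, hS0 w hw⟩
        simp only at this
        simp only [this, norm_pos_iff]
        exact (g.symm ⟨w, hS0 w hw⟩).2)
    refine ⟨min δ m, lt_min hδ hm, fun {z} hz => ?_⟩
    rw [dist_zero_right, lt_min_iff] at hz
    rw [ext0_zero, dist_zero_right]
    by_cases hz0 : z = 0
    · rw [hz0, ext0_zero, norm_zero]; exact hε
    have e1 := ext0_ne g ⟨z, hz0⟩
    simp only at e1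
    rw [e1]
    by_contra hcon
    push Not at hcon
    have hb := h ⟨z, hz0⟩ hz.1
    have hmem : (g ⟨z, hz0⟩ : ℂ) ∈ S := by
      constructor
      · simpa using hb
      · simpa using hcon
    have h2 := hmS _ hmem
    rw [ext0_ne] at h2
    simp at h2
    linarith [hz.2]
  · exact ext0_contAt g g.continuous z hz

theorem ext0_inv (g : Cs ≃ₜ Cs) (z : ℂ) : ext0 g.symm (ext0 g z) = z := by
  by_cases hz : z = 0
  · rw [hz, ext0_zero, ext0_zero]
  · have e1 := ext0_ne g ⟨z, hz⟩
    simp only at e1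
    rw [e1, ext0_ne]
    simp

/-- inclusion of the circle in the plane -/
def cc (u : Circle) : ℂ := Circle.coeHom u

theorem cc_cont : Continuous cc := continuous_subtype_val

theorem cc_norm (u : Circle) : ‖cc u‖ = 1 := Circle.norm_coe u

theorem cc_ne (u : Circle) : cc u ≠ 0 := Circle.coe_ne_zero u

theorem cc_inj : Function.Injective cc := Circle.coe_injective

/-- the direction of a nonzero complex number -/
def dir (z : Cs) : Circle :=
  (Subtype.mk ((z : ℂ) / (‖(z : ℂ)‖ : ℂ)) (by
    have := norm_ne_zero_iff.mpr z.2
    refine mem_sphere_zero_iff_norm.mpr ?_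
    rw [norm_div]
    simp [this]) : Submonoid.unitSphere ℂ)

theorem dir_cont : Continuous dir := by
  have h : Continuous fun z : Cs => (z : ℂ) / (‖(z : ℂ)‖ : ℂ) :=
    continuous_subtype_val.div (by fun_prop) (fun z => by simpa using z.2)
  exact h.subtype_mk _

theorem cc_dir (z : Cs) : cc (dir z) = (z : ℂ) / (‖(z : ℂ)‖ : ℂ) := rfl

/-- polar coordinates homeomorphism on the circle times the line -/
def polar0 : Circle × ℝ ≃ₜ Cs where
  toFun p := ⟨cc p.1 * (Real.exp p.2 : ℂ),
    mul_ne_zero (cc_ne _) (by exact_mod_cast (Real.exp_pos _).ne')⟩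
  invFun z := (dir z, Real.log ‖(z : ℂ)‖)
  left_inv p := by
    have h : ‖cc p.1 * (Real.exp p.2 : ℂ)‖ = Real.exp p.2 := by
      rw [norm_mul, cc_norm, one_mul, Complex.norm_real, Real.norm_of_nonneg (Real.exp_pos _).le]
    have h' : (Real.exp p.2 : ℂ) ≠ 0 := by exact_mod_cast (Real.exp_pos _).ne'
    apply Prod.ext
    · apply cc_inj
      rw [cc_dir]
      simp only [h]
      exact mul_div_cancel_right₀ _ h'
    · simp only [h, Real.log_exp]
  right_inv z := by
    have h : 0 < ‖(z : ℂ)‖ := norm_pos_iff.mpr z.2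
    have h' : (‖(z : ℂ)‖ : ℂ) ≠ 0 := by exact_mod_cast h.ne'
    apply Subtype.ext
    simp only [cc_dir, Real.exp_log h]
    field_simp
  continuous_toFun := by
    apply Continuous.subtype_mk
    exact (cc_cont.comp continuous_fst).mul (by fun_prop)
  continuous_invFun := by
    refine dir_cont.prodMk ?_
    exact (continuous_subtype_val.norm).log fun z => norm_ne_zero_iff.mpr z.2

/-- polar coordinates on the annulus -/
def polar : Ann ≃ₜ Cs :=
  ((AddCircle.homeomorphCircle one_ne_zero).prodCongr (Homeomorph.refl ℝ)).trans polar0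

theorem polar_zero (x : AddCircle (1 : ℝ)) : (polar (x, 0) : ℂ) = cc (AddCircle.toCircle x) := by
  have : (polar (x, 0) : ℂ) =
    cc (AddCircle.homeomorphCircle one_ne_zero x) * (Real.exp 0 : ℂ) := rfl
  rw [this, AddCircle.homeomorphCircle_apply]
  simp

theorem polar_inj {a b : Ann} (h : (polar a : ℂ) = polar b) : a = b :=
  polar.injective (Subtype.ext h)

theorem polar_cont : Continuous fun a : Ann => (polar a : ℂ) :=
  continuous_subtype_val.comp polar.continuous

theorem null_of_log (ψ : C(AddCircle (1 : ℝ), Ann)) (h : HasLog fun x => (polar (ψ x) : ℂ)) :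
    ∃ pt : Ann, ψ.Homotopic (ContinuousMap.const _ pt) := by
  obtain ⟨g, hg, he⟩ := h
  refine ⟨polar.symm ⟨1, one_ne_zero⟩, ⟨⟨⟨fun p => polar.symm
    ⟨Complex.exp ((1 - ((p.1 : ℝ) : ℂ)) * g p.2), Complex.exp_ne_zero _⟩, ?_⟩, ?_, ?_⟩⟩⟩
  · apply polar.symm.continuous.comp
    apply Continuous.subtype_mk
    fun_prop
  · intro x
    apply polar.injective
    apply Subtype.ext
    simp [he]
  · intro x
    apply polar.injective
    apply Subtype.ext
    simp

theorem log_of_null (ψ : C(AddCircle (1 : ℝ), Ann))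
    (h : ∃ pt : Ann, ψ.Homotopic (ContinuousMap.const _ pt)) :
    HasLog fun x => (polar (ψ x) : ℂ) := by
  obtain ⟨pt, ⟨Φ⟩⟩ := h
  have := hasLog_path (T := unitInterval) (X := AddCircle (1 : ℝ)) (fun p => (polar (Φ p) : ℂ))
    (polar_cont.comp Φ.continuous) (fun p => (polar _).2) 1 0 (by
      simp only [Φ.apply_one, ContinuousMap.const_apply]
      exact hasLog_const (polar pt).2)
  simpa using this

theorem ends (f : Ann ≃ₜ Ann) (hiso : IsotopicToId f) :
    (∃ R : ℝ, ∀ p : Ann, ‖(polar p : ℂ)‖ < 1 → ‖(polar (f p) : ℂ)‖ ≤ R) ∧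
    (∃ r : ℝ, 0 < r ∧ ∀ p : Ann, ‖(polar (f p) : ℂ)‖ < r → ‖(polar p : ℂ)‖ ≤ 1) := by
  obtain ⟨H, hH, hh, hH0, hH1⟩ := hiso
  have hHi : ∀ t a b, H t a = H t b → a = b := fun t a b e => by
    obtain ⟨h, hh⟩ := hh t
    rw [hh, hh] at e
    exact h.injective e
  have hHc : ∀ {Y : Type} [TopologicalSpace Y] (u : Y → ℝ) (k : Y → Ann), Continuous u →
      Continuous k → Continuous fun y => (polar (H (u y) (k y)) : ℂ) := fun u k hu hk =>
    polar_cont.comp (hH.comp (hu.prodMk hk))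
  let C : AddCircle (1 : ℝ) → ℂ := fun x => (polar (x, 0) : ℂ)
  have hC : Continuous C := polar_cont.comp (by fun_prop)
  have hCn : ∀ x, ‖C x‖ = 1 := fun x => by simp only [C]; rw [polar_zero, cc_norm]
  have hCl : ¬ HasLog C := fun h => circle_no_log (by
    have e : C = fun x => cc (AddCircle.toCircle x) := funext polar_zero
    rw [e] at h
    exact h)
  let D : AddCircle (1 : ℝ) → ℂ := fun x => (polar (f (x, 0)) : ℂ)
  have hD : Continuous D := polar_cont.comp (f.continuous.comp (by fun_prop))
  have hDl : ¬ HasLog D := fun h => hCl (by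
    have := hasLog_path (T := ℝ) (fun z : ℝ × AddCircle (1 : ℝ) => (polar (H z.1 (z.2, 0)) : ℂ))
      (hHc _ _ continuous_fst (by fun_prop)) (fun z => (polar _).2) 1 0 (by simpa only [hH1] using h)
    simpa only [hH0] using this)
  have trans : ∀ p : Ann, ‖(polar p : ℂ)‖ ≠ 1 → ∀ s t : ℝ,
      HasLog (fun x : AddCircle (1 : ℝ) => (polar (H s (x, 0)) : ℂ) - polar (H s p)) →
      HasLog (fun x : AddCircle (1 : ℝ) => (polar (H t (x, 0)) : ℂ) - polar (H t p)) := by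
    intro p hp s t h
    refine hasLog_path (T := ℝ) (fun z : ℝ × AddCircle (1 : ℝ) =>
      (polar (H z.1 (z.2, 0)) : ℂ) - polar (H z.1 p))
      ((hHc _ _ continuous_fst (by fun_prop)).sub (hHc _ _ continuous_fst continuous_const))
      (fun z hz => hp ?_) s t h
    have := hHi _ _ _ (polar_inj (sub_eq_zero.mp hz))
    rw [← this]
    exact hCn z.2
  obtain ⟨R, hR⟩ := (isCompact_range hD).isBounded.exists_norm_le
  obtain ⟨r, hr, hrD⟩ := (isCompact_range hD).exists_forall_le' (f := fun w => ‖w‖) (a := 0)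
    continuous_norm.continuousOn (by
      rintro _ ⟨x, rfl⟩
      exact norm_pos_iff.mpr (polar _).2)
  refine ⟨⟨R, fun p hp => ?_⟩, ⟨r, hr, fun p hp => ?_⟩⟩
  · by_contra hcon
    push Not at hcon
    have h1 : HasLog (fun x => D x - polar (f p)) :=
      hasLog_far hD (fun x => lt_of_le_of_lt (hR _ ⟨x, rfl⟩) hcon) (polar _).2
    have h2 := trans p hp.ne 1 0 (by simpa only [hH1] using h1)
    simp only [hH0] at h2
    apply hCl
    have h3 := hasLog_base hC (S := Metric.ball 0 1) (convex_ball _ _).isPreconnected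
      (fun x hx => by rw [mem_ball_zero_iff, hCn] at hx; exact lt_irrefl _ hx)
      (mem_ball_zero_iff.mpr hp) (Metric.mem_ball_self one_pos) h2
    simpa using h3
  · by_contra hcon
    push Not at hcon
    have h1 : HasLog (fun x => C x - polar p) :=
      hasLog_far hC (fun x => by rw [hCn]; exact hcon) (polar _).2
    have h2 := trans p hcon.ne' 0 1 (by simpa only [hH0] using h1)
    simp only [hH1] at h2
    apply hDl
    have h3 := hasLog_base hD (S := Metric.ball 0 r) (convex_ball _ _).isPreconnected
      (fun x hx => by
        rw [mem_ball_zero_iff] at hx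
        exact absurd (hrD _ ⟨x, rfl⟩) (not_le.mpr hx))
      (mem_ball_zero_iff.mpr hp) (Metric.mem_ball_self hr) h2
    simpa using h3

/-- the planar homeomorphism associated with an annulus homeomorphism isotopic to the identity -/
theorem exists_ext (f : Ann ≃ₜ Ann) (hiso : IsotopicToId f) :
    ∃ F : ℂ ≃ₜ ℂ, F 0 = 0 ∧ ∀ a : Ann, F (polar a) = polar (f a) := by
  obtain ⟨⟨R, hR⟩, r, hr, hr1⟩ := ends f hiso
  let g : Cs ≃ₜ Cs := (polar.symm.trans f).trans polar
  have hg : ∀ z, g z = polar (f (polar.symm z)) := fun z => rfl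
  have hgs : ∀ z, g.symm z = polar (f.symm (polar.symm z)) := fun z => rfl
  have c1 : Continuous (ext0 g) := ext0_cont g 1 R one_pos fun z hz => by
    rw [hg]
    exact hR _ (by simpa using hz)
  have c2 : Continuous (ext0 g.symm) := ext0_cont g.symm r 1 hr fun z hz => by
    rw [hgs]
    exact hr1 _ (by simpa using hz)
  refine ⟨⟨⟨ext0 g, ext0 g.symm, ext0_inv g, ext0_inv g.symm⟩, c1, c2⟩, ext0_zero g, fun a => ?_⟩
  refine (ext0_ne g (polar a)).trans ?_
  rw [hg]
  simp

theorem no_free_curve (f : Ann ≃ₜ Ann) (hint : IntersectionProperty f)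
    (φ : AddCircle (1 : ℝ) → ℂ) (hc : Continuous φ) (hi : Function.Injective φ)
    (hl : ¬ HasLog φ) (h0 : ∀ x, φ x ≠ 0)
    (hd : ∀ x y, polar.symm ⟨φ x, h0 x⟩ ≠ f (polar.symm ⟨φ y, h0 y⟩)) : False := by
  let ψ : C(AddCircle (1 : ℝ), Ann) :=
    ⟨fun x => polar.symm ⟨φ x, h0 x⟩, polar.symm.continuous.comp (hc.subtype_mk _)⟩
  have hψ : ∀ x, (polar (ψ x) : ℂ) = φ x := fun x => by simp [ψ]
  have hess : IsEssentialCircle (range ψ) := by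
    refine ⟨ψ, fun x y h => hi ?_, rfl, fun h => hl ?_⟩
    · rw [← hψ, ← hψ, h]
    · have := log_of_null ψ h
      simpa only [hψ] using this
  obtain ⟨_, ⟨x, rfl⟩, _, ⟨y, rfl⟩, h⟩ := hint _ hess
  exact hd x y h.symm

theorem main (f : Ann ≃ₜ Ann) (hiso : IsotopicToId f) (hint : IntersectionProperty f)
    (q : ℕ) (hq : 1 < q) : IntersectionProperty ((⇑f)^[q]) := by
  rintro c ⟨ψ, hψi, rfl, hψn⟩
  by_contra hne
  obtain ⟨F, hF0, hF⟩ := exists_ext f hiso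
  have hFq : ∀ (n : ℕ) (a : Ann), F^[n] (polar a) = polar (f^[n] a) := by
    intro n
    induction n with
    | zero => intro a; rfl
    | succ n ih => intro a; rw [Function.iterate_succ_apply, hF, ih, Function.iterate_succ_apply]
  have hpow : ∀ n : ℕ, ∃ G : ℂ ≃ₜ ℂ, ⇑G = F^[n] ∧ ⇑G.symm = F.symm^[n] := by
    intro n
    induction n with
    | zero => exact ⟨Homeomorph.refl ℂ, rfl, rfl⟩
    | succ n ih =>
      obtain ⟨G, h1, h2⟩ := ih
      refine ⟨F.trans G, ?_, ?_⟩
      · rw [Function.iterate_succ, ← h1]; rfl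
      · rw [Function.iterate_succ', ← h2]; rfl
  obtain ⟨G, hG, hGs⟩ := hpow q
  have hF0s : F.symm 0 = 0 := by rw [Homeomorph.symm_apply_eq, hF0]
  have hFs : ∀ z : Cs, ∀ w : Cs, (z : ℂ) = F w → polar.symm z = f (polar.symm w) := by
    intro z w h
    apply polar.injective
    apply Subtype.ext
    rw [← hF]
    simpa using h
  obtain ⟨U, hUb, hUo, h0U, hU⟩ := sep_step (κ := fun x => (polar (ψ x) : ℂ))
    (polar_cont.comp ψ.continuous) (fun x => (polar _).2) (fun h => hψn (null_of_log ψ h)) G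
    (by rw [hG]; exact Function.iterate_fixed hF0 q) (fun x y h => hne (by
      rw [hG, hFq] at h
      exact ⟨ψ x, ⟨x, rfl⟩, ψ y, ⟨y, rfl⟩, (polar_inj h).symm⟩))
  have key : ∀ φ : AddCircle (1 : ℝ) → ℂ, Continuous φ → Function.Injective φ → ¬ HasLog φ →
      (∀ x, φ x ≠ 0) → (∀ x y, φ x ≠ F (φ y)) → False := by
    intro φ hc hi hl h0 hd
    refine no_free_curve f hint φ hc hi hl h0 fun x y h => hd x y ?_
    have := congrArg (fun a => (polar a : ℂ)) h
    simp only [← hF] at this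
    simpa using this
  rcases hU with hU | hU
  · rw [hG] at hU
    obtain ⟨φ, hc, hi, hl, h0, hd⟩ := AnnSep.planar F hF0 U hUb hUo h0U q (by omega) hU
    exact key φ hc hi hl h0 hd
  · rw [hGs] at hU
    obtain ⟨φ, hc, hi, hl, h0, hd⟩ := AnnSep.planar F.symm hF0s U hUb hUo h0U q (by omega) hU
    refine key φ hc hi hl h0 fun x y h => hd y x ?_
    rw [h]
    simp

end AnnTop

/-- Lemma 3.2: if `f` is a homeomorphism of the open annulus isotopic to the identity with
the intersection property, then `f^q` has the intersection property for every `q > 1`. -/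
theorem iterate_intersection_property
    (f : Ann ≃ₜ Ann) (hiso : IsotopicToId f) (hint : IntersectionProperty f)
    (q : ℕ) (hq : 1 < q) :
    IntersectionProperty ((⇑f)^[q]) := by
  exact AnnTop.main f hiso hint q hq
end
end
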